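/- arXiv:1910.03303 — 3 statements merged into one kernel-verified Lean document; each statement's English description precedes it below -/
import Mathlib

section
/- Assume the reverse Loewner flow setup with 0 < σ < 4. Let p ∈ (σ/(4−σ), ∞) be such that 16p² − σ²(p+1)² > 0 and e^p = √(16−σ²)/√(16p² − σ²(p+1)²), and set L = σ·(1+p)·e^p/√(16−σ²). Then |X(s)| ≤ L·Y(s) for all s ∈ [0,t]. -/
open Set MeasureTheory intervalIntegral Real

/-!
By the symmetry `(β, X) ↦ (-β, -X)` it suffices to bound `X` above, and only on an excursion
`[a, b]` of `X` into `[0, ∞)`. There the singular drift `J = β - X` is nondecreasing, so that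
`X s ≤ σ √(s - a) - (J s - J a)`. Replacing `σ √(s - a)` by `w s = √(σ² (s - a) + (ℓ Y a)²)`
gives a differentiable majorant `D = w - (J - J a)` of `X` with `D a = ℓ Y a` and `D ≤ w`. After
the last time at which `D = ℓ Y`, the function `log (D / Y) + K D / w` is nonincreasing for suitable
`ℓ` and `K`; as `0 ≤ D / w ≤ 1`, this bounds `D / Y` by `ℓ e^K`. Finally `ℓ` and `K` are chosen
with `ℓ e^K = σ (1 + p) e^p / √(16 - σ²)`.
-/

lemma exists_eq_and_forall_Icc_ge_of_continuousOn {α δ : Type*}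
    [ConditionallyCompleteLinearOrder α] [TopologicalSpace α] [OrderTopology α] [DenselyOrdered α]
    [LinearOrder δ] [TopologicalSpace δ] [OrderClosedTopology δ]
    {f : α → δ} {a b : α} {m : δ} (hab : a ≤ b) (hf : ContinuousOn f (Icc a b))
    (ha : f a ≤ m) (hb : m ≤ f b) :
    ∃ c ∈ Icc a b, f c = m ∧ ∀ s ∈ Icc c b, m ≤ f s := by
  have hcompact : IsCompact (Icc a b ∩ f ⁻¹' {m}) :=
    isCompact_Icc.of_isClosed_subset
      (hf.preimage_isClosed_of_isClosed isClosed_Icc isClosed_singleton) inter_subset_left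
  obtain ⟨c, ⟨hc, hfc⟩, hlast⟩ :=
    hcompact.exists_isGreatest (intermediate_value_Icc hab hf ⟨ha, hb⟩)
  refine ⟨c, hc, hfc, fun s hs ↦ le_of_not_gt fun hlt ↦ ?_⟩
  obtain ⟨u, hu, hfu⟩ := intermediate_value_Icc hs.2
    (hf.mono (Icc_subset_Icc_left (hc.1.trans hs.1))) ⟨hlt.le, hb⟩
  have huc : u ≤ c := hlast ⟨⟨hc.1.trans (hs.1.trans hu.1), hu.2⟩, hfu⟩
  have hsc : s = c := le_antisymm (hu.1.trans huc) hs.1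
  exact hlt.ne (hsc ▸ hfc)

lemma hasDerivWithinAt_integral_of_continuousOn {E : Type*} [NormedAddCommGroup E]
    [NormedSpace ℝ E] [CompleteSpace E] {f : ℝ → E} {a b s : ℝ} (hf : ContinuousOn f (Icc a b))
    (hs : s ∈ Icc a b) : HasDerivWithinAt (fun u ↦ ∫ r in a..u, f r) (f s) (Icc a b) s := by
  have : Fact (s ∈ Icc a b) := ⟨hs⟩
  have hint : IntervalIntegrable f volume a s :=
    (hf.mono (Icc_subset_Icc_right hs.2)).intervalIntegrable_of_Icc hs.1
  exact integral_hasDerivWithinAt_right hint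
    (hf.stronglyMeasurableAtFilter_nhdsWithin measurableSet_Icc s) (hf s hs)

/-- The parameters `(ℓ, K)` for which a driver with Hölder-`1/2` constant `σ` keeps the reverse
flow inside the cone `|X| ≤ ℓ * exp K * Y`. The last two conditions are the extreme cases `X = 0`
and `X = D` of the inequality that makes `conePotential K` nonincreasing for a majorant `D`. -/
structure IsConePair (σ ℓ K : ℝ) : Prop where
  pos : 0 < ℓ
  nonneg : 0 ≤ K
  axis_le : (4 + K) * σ ^ 2 ≤ 16 * ℓ ^ 2
  edge_le : (4 + K) * σ ^ 2 * (ℓ ^ 2 + 1) ≤ 16 * (2 + K) * ℓ ^ 2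

/-- The Lyapunov function of the comparison argument, for a majorant `D` of `X` that is itself
bounded by `w`. -/
noncomputable def conePotential (K : ℝ) (w D Y : ℝ → ℝ) (s : ℝ) : ℝ :=
  log (D s) - log (Y s) + K * (D s / w s)

/-- `D` is a majorant of the real part `X` of the flow on `[a, b]` obtained by subtracting the
singular drift of `X` from an envelope `w` of the driver, where `w ^ 2` grows at rate `σ ^ 2`. -/
structure IsConeMajorant (σ a b : ℝ) (X Y w D : ℝ → ℝ) : Prop where
  deriv_envelope : ∀ s ∈ Icc a b, HasDerivWithinAt w (σ ^ 2 / (2 * w s)) (Icc a b) s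
  deriv_majorant : ∀ s ∈ Icc a b, HasDerivWithinAt D
    (σ ^ 2 / (2 * w s) - 2 * X s / (X s ^ 2 + Y s ^ 2)) (Icc a b) s
  deriv_im : ∀ s ∈ Icc a b, HasDerivWithinAt Y (2 * Y s / (X s ^ 2 + Y s ^ 2)) (Icc a b) s
  re_nonneg : ∀ s ∈ Icc a b, 0 ≤ X s
  im_pos : ∀ s ∈ Icc a b, 0 < Y s
  re_le : ∀ s ∈ Icc a b, X s ≤ D s
  le_envelope : ∀ s ∈ Icc a b, D s ≤ w s

lemma IsConeMajorant.mono {σ a b c : ℝ} {X Y w D : ℝ → ℝ} (hD : IsConeMajorant σ a b X Y w D)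
    (hac : a ≤ c) : IsConeMajorant σ c b X Y w D := by
  have hsub : Icc c b ⊆ Icc a b := Icc_subset_Icc_left hac
  exact ⟨fun s hs ↦ (hD.deriv_envelope s (hsub hs)).mono hsub,
    fun s hs ↦ (hD.deriv_majorant s (hsub hs)).mono hsub,
    fun s hs ↦ (hD.deriv_im s (hsub hs)).mono hsub, fun s hs ↦ hD.re_nonneg s (hsub hs),
    fun s hs ↦ hD.im_pos s (hsub hs), fun s hs ↦ hD.re_le s (hsub hs),
    fun s hs ↦ hD.le_envelope s (hsub hs)⟩

namespace IsConePair

variable {σ ℓ K a b : ℝ}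

lemma mul_sq_add_sq_le (h : IsConePair σ ℓ K) {x y d : ℝ} (hx : 0 ≤ x) (hy : 0 ≤ y)
    (hxd : x ≤ d) (hyd : ℓ * y ≤ d) :
    (4 + K) * σ ^ 2 * (x ^ 2 + y ^ 2) ≤ 16 * (d ^ 2 + (1 + K) * (d * x)) := by
  have hd : 0 ≤ d := hx.trans hxd
  have hκ : 0 ≤ (4 + K) * σ ^ 2 := by have := h.nonneg; positivity
  have hx2 : x ^ 2 ≤ d * x := by nlinarith
  have hy2 : (ℓ * y) ^ 2 ≤ d ^ 2 := pow_le_pow_left₀ (mul_nonneg h.pos.le hy) hyd 2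
  have hdx : 0 ≤ d * (d - x) := mul_nonneg hd (sub_nonneg.2 hxd)
  refine le_of_mul_le_mul_right ?_ (pow_pos h.pos 2)
  calc (4 + K) * σ ^ 2 * (x ^ 2 + y ^ 2) * ℓ ^ 2
      = (4 + K) * σ ^ 2 * (ℓ ^ 2 * x ^ 2 + (ℓ * y) ^ 2) := by ring
    _ ≤ (4 + K) * σ ^ 2 * (ℓ ^ 2 * (d * x) + d ^ 2) := by gcongr
    _ = (4 + K) * σ ^ 2 * (ℓ ^ 2 + 1) * (d * x) + (4 + K) * σ ^ 2 * (d * (d - x)) := by ring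
    _ ≤ 16 * (2 + K) * ℓ ^ 2 * (d * x) + 16 * ℓ ^ 2 * (d * (d - x)) :=
        add_le_add (mul_le_mul_of_nonneg_right h.edge_le (mul_nonneg hd hx))
          (mul_le_mul_of_nonneg_right h.axis_le hdx)
    _ = 16 * (d ^ 2 + (1 + K) * (d * x)) * ℓ ^ 2 := by ring

lemma sq_mul_ratio_le (h : IsConePair σ ℓ K) {x y d δ : ℝ} (hx : 0 ≤ x) (hy : 0 ≤ y)
    (hxd : x ≤ d) (hyd : ℓ * y ≤ d) (hδ₀ : 0 ≤ δ) (hδ₁ : δ ≤ 1) :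
    σ ^ 2 * δ * (1 + K * δ * (1 - δ)) * (x ^ 2 + y ^ 2) ≤
      4 * (d ^ 2 + (1 + K * δ) * (d * x)) := by
  have hamgm : 4 * (δ * (1 - δ)) ≤ 1 := by nlinarith [sq_nonneg (1 - 2 * δ)]
  have hK : 4 * (1 + K * δ * (1 - δ)) ≤ 4 + K := by nlinarith [h.nonneg]
  have hmain := h.mul_sq_add_sq_le hx hy hxd hyd
  have hrest : 0 ≤ (1 - δ) * (d ^ 2 + d * x) :=
    mul_nonneg (sub_nonneg.2 hδ₁) (by have := hx.trans hxd; positivity)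
  have hquad : 4 * (σ ^ 2 * δ * (1 + K * δ * (1 - δ)) * (x ^ 2 + y ^ 2)) ≤
      16 * (d ^ 2 + (1 + K * δ) * (d * x)) := by
    calc 4 * (σ ^ 2 * δ * (1 + K * δ * (1 - δ)) * (x ^ 2 + y ^ 2))
        = 4 * (1 + K * δ * (1 - δ)) * (σ ^ 2 * δ * (x ^ 2 + y ^ 2)) := by ring
      _ ≤ (4 + K) * (σ ^ 2 * δ * (x ^ 2 + y ^ 2)) := by gcongr
      _ = δ * ((4 + K) * σ ^ 2 * (x ^ 2 + y ^ 2)) := by ring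
      _ ≤ δ * (16 * (d ^ 2 + (1 + K) * (d * x))) := by gcongr
      _ ≤ 16 * (d ^ 2 + (1 + K * δ) * (d * x)) := by linarith
  linarith

lemma deriv_conePotential_nonpos (h : IsConePair σ ℓ K) {x y d w : ℝ} (hx : 0 ≤ x) (hy : 0 < y)
    (hd : 0 < d) (hxd : x ≤ d) (hdw : d ≤ w) (hyd : ℓ * y ≤ d) :
    (σ ^ 2 / (2 * w) - 2 * x / (x ^ 2 + y ^ 2)) / d - 2 * y / (x ^ 2 + y ^ 2) / y +
      K * (((σ ^ 2 / (2 * w) - 2 * x / (x ^ 2 + y ^ 2)) * w - d * (σ ^ 2 / (2 * w))) / w ^ 2)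
      ≤ 0 := by
  have hw : 0 < w := hd.trans_le hdw
  have hratio := h.sq_mul_ratio_le hx hy.le hxd hyd (div_nonneg hd.le hw.le)
    (div_le_one_of_le₀ hdw hw.le)
  have hN : 0 < x ^ 2 + y ^ 2 := by positivity
  generalize x ^ 2 + y ^ 2 = N at *
  calc _ = (σ ^ 2 * (d / w) * (1 + K * (d / w) * (1 - d / w)) * N -
        4 * (d ^ 2 + (1 + K * (d / w)) * (d * x))) / (2 * N * d ^ 2) := by
        field_simp
        ring
    _ ≤ 0 := div_nonpos_of_nonpos_of_nonneg (sub_nonpos.2 hratio) (by positivity)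

variable {X Y w D : ℝ → ℝ}

lemma antitoneOn_conePotential (h : IsConePair σ ℓ K) (hD : IsConeMajorant σ a b X Y w D)
    (hcone : ∀ s ∈ Icc a b, ℓ * Y s ≤ D s) :
    AntitoneOn (conePotential K w D Y) (Icc a b) := by
  have hpos : ∀ s ∈ Icc a b, 0 < D s := fun s hs ↦
    (mul_pos h.pos (hD.im_pos s hs)).trans_le (hcone s hs)
  have hderiv := fun s (hs : s ∈ Icc a b) ↦
    (((hD.deriv_majorant s hs).log (hpos s hs).ne').sub
      ((hD.deriv_im s hs).log (hD.im_pos s hs).ne')).add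
      (((hD.deriv_majorant s hs).div (hD.deriv_envelope s hs)
        ((hpos s hs).trans_le (hD.le_envelope s hs)).ne').const_mul K)
  refine antitoneOn_of_hasDerivWithinAt_nonpos (convex_Icc a b)
    (fun s hs ↦ (hderiv s hs).continuousWithinAt)
    (fun s hs ↦ (hderiv s (interior_subset hs)).mono interior_subset) fun s hs ↦ ?_
  have hs := interior_subset hs
  exact h.deriv_conePotential_nonpos (hD.re_nonneg s hs) (hD.im_pos s hs) (hpos s hs)
    (hD.re_le s hs) (hD.le_envelope s hs) (hcone s hs)

lemma majorant_le_of_eq_of_forall_ge (h : IsConePair σ ℓ K) (hab : a ≤ b)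
    (hD : IsConeMajorant σ a b X Y w D) (hDa : D a = ℓ * Y a)
    (hcone : ∀ s ∈ Icc a b, ℓ * Y s ≤ D s) :
    D b ≤ ℓ * exp K * Y b := by
  have ha : a ∈ Icc a b := left_mem_Icc.2 hab
  have hb : b ∈ Icc a b := right_mem_Icc.2 hab
  have hYa : 0 < Y a := hD.im_pos a ha
  have hYb : 0 < Y b := hD.im_pos b hb
  have hDa_pos : 0 < D a := hDa ▸ mul_pos h.pos hYa
  have hDb_pos : 0 < D b := (mul_pos h.pos hYb).trans_le (hcone b hb)
  have hratio_a : D a / w a ≤ 1 :=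
    div_le_one_of_le₀ (hD.le_envelope a ha) (hDa_pos.le.trans (hD.le_envelope a ha))
  have hratio_b : 0 ≤ D b / w b :=
    div_nonneg hDb_pos.le (hDb_pos.le.trans (hD.le_envelope b hb))
  have hstart : conePotential K w D Y a ≤ log ℓ + K := by
    calc conePotential K w D Y a = log ℓ + K * (D a / w a) := by
          rw [conePotential, congrArg log hDa, log_mul h.pos.ne' hYa.ne', add_sub_cancel_right]
      _ ≤ log ℓ + K := by gcongr; exact mul_le_of_le_one_right h.nonneg hratio_a
  have hend : log (D b) - log (Y b) ≤ conePotential K w D Y b :=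
    le_add_of_nonneg_right (mul_nonneg h.nonneg hratio_b)
  have hanti := h.antitoneOn_conePotential hD hcone ha hb hab
  refine (log_le_log_iff hDb_pos (by have := h.pos; positivity)).1 ?_
  rw [log_mul (mul_pos h.pos (exp_pos K)).ne' hYb.ne', log_mul h.pos.ne' (exp_pos K).ne', log_exp]
  linarith

lemma majorant_le (h : IsConePair σ ℓ K) (hab : a ≤ b) (hD : IsConeMajorant σ a b X Y w D)
    (hDa : D a ≤ ℓ * Y a) :
    D b ≤ ℓ * exp K * Y b := by
  rcases le_total (D b) (ℓ * Y b) with hDb | hDb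
  · have hℓ := h.pos
    have hYb := hD.im_pos b (right_mem_Icc.2 hab)
    calc D b ≤ ℓ * 1 * Y b := by rwa [mul_one]
      _ ≤ ℓ * exp K * Y b := by gcongr; exact one_le_exp h.nonneg
  obtain ⟨c, hc, hDc, hcone⟩ := exists_eq_and_forall_Icc_ge_of_continuousOn (m := 0) hab
    (f := fun s ↦ D s - ℓ * Y s)
    (fun s hs ↦
      ((hD.deriv_majorant s hs).sub ((hD.deriv_im s hs).const_mul ℓ)).continuousWithinAt)
    (sub_nonpos.2 hDa) (sub_nonneg.2 hDb)
  exact h.majorant_le_of_eq_of_forall_ge hc.2 (hD.mono hc.1) (sub_eq_zero.1 hDc)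
    fun s hs ↦ sub_nonneg.1 (hcone s hs)

lemma le_mul_exp_mul_of_excursion (h : IsConePair σ ℓ K) (hab : a ≤ b) {J : ℝ → ℝ}
    (hJ' : ∀ s ∈ Icc a b, HasDerivWithinAt J (2 * X s / (X s ^ 2 + Y s ^ 2)) (Icc a b) s)
    (hY' : ∀ s ∈ Icc a b, HasDerivWithinAt Y (2 * Y s / (X s ^ 2 + Y s ^ 2)) (Icc a b) s)
    (hX : ∀ s ∈ Icc a b, 0 ≤ X s) (hY : ∀ s ∈ Icc a b, 0 < Y s)
    (hXJ : ∀ s ∈ Icc a b, X s ≤ σ * √(s - a) - (J s - J a)) :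
    X b ≤ ℓ * exp K * Y b := by
  set w : ℝ → ℝ := fun s ↦ √(σ ^ 2 * (s - a) + (ℓ * Y a) ^ 2)
  have ha : a ∈ Icc a b := left_mem_Icc.2 hab
  have hr : 0 < ℓ * Y a := mul_pos h.pos (hY a ha)
  have hJ : MonotoneOn J (Icc a b) :=
    monotoneOn_of_hasDerivWithinAt_nonneg (convex_Icc a b)
      (fun s hs ↦ (hJ' s hs).continuousWithinAt)
      (fun s hs ↦ (hJ' s (interior_subset hs)).mono interior_subset)
      fun s hs ↦ by have := hX s (interior_subset hs); positivity
  have hw' : ∀ s ∈ Icc a b, HasDerivWithinAt w (σ ^ 2 / (2 * w s)) (Icc a b) s := by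
    intro s hs
    have hradicand : 0 < σ ^ 2 * (s - a) + (ℓ * Y a) ^ 2 := by
      have := sub_nonneg.2 hs.1
      positivity
    simpa only [mul_one, id_eq] using ((((hasDerivWithinAt_id s (Icc a b)).sub_const a).const_mul
      (σ ^ 2)).add_const ((ℓ * Y a) ^ 2)).sqrt hradicand.ne'
  have hσw : ∀ s ∈ Icc a b, σ * √(s - a) ≤ w s := by
    intro s hs
    refine le_sqrt_of_sq_le ?_
    rw [mul_pow, sq_sqrt (sub_nonneg.2 hs.1)]
    exact le_add_of_nonneg_right (sq_nonneg _)
  have hD : IsConeMajorant σ a b X Y w fun s ↦ w s - (J s - J a) :=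
    ⟨hw', fun s hs ↦ (hw' s hs).sub ((hJ' s hs).sub_const (J a)), hY', hX, hY,
      fun s hs ↦ (hXJ s hs).trans (sub_le_sub_right (hσw s hs) _),
      fun s hs ↦ sub_le_self _ (sub_nonneg.2 (hJ ha hs hs.1))⟩
  refine (hD.re_le b (right_mem_Icc.2 hab)).trans (h.majorant_le hab hD ?_)
  simp only [w, sub_self, mul_zero, zero_add, sub_zero, sqrt_sq hr.le, le_refl]

end IsConePair

/-- The reverse Loewner flow on `[0, t]` driven by `β` and started at height `y`, as a system of
integral equations for the real part `X` and the imaginary part `Y`. -/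
structure IsReverseLoewnerFlow (β : ℝ → ℝ) (y t : ℝ) (X Y : ℝ → ℝ) : Prop where
  continuousOn_re : ContinuousOn X (Icc 0 t)
  continuousOn_im : ContinuousOn Y (Icc 0 t)
  im_pos : ∀ s ∈ Icc (0 : ℝ) t, 0 < Y s
  re_eq : ∀ s ∈ Icc (0 : ℝ) t, X s = β s - ∫ r in (0 : ℝ)..s, 2 * X r / (X r ^ 2 + Y r ^ 2)
  im_eq : ∀ s ∈ Icc (0 : ℝ) t, Y s = y + ∫ r in (0 : ℝ)..s, 2 * Y r / (X r ^ 2 + Y r ^ 2)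

namespace IsReverseLoewnerFlow

variable {β X Y : ℝ → ℝ} {y t s σ ℓ K : ℝ}

lemma neg (h : IsReverseLoewnerFlow β y t X Y) :
    IsReverseLoewnerFlow (fun s ↦ -β s) y t (fun s ↦ -X s) Y where
  continuousOn_re := h.continuousOn_re.neg
  continuousOn_im := h.continuousOn_im
  im_pos := h.im_pos
  re_eq s hs := by
    simp only [neg_sq, mul_neg, neg_div, intervalIntegral.integral_neg, h.re_eq s hs]
    ring
  im_eq s hs := by simpa only [neg_sq] using h.im_eq s hs

lemma continuousOn_two_mul_div (h : IsReverseLoewnerFlow β y t X Y) {f : ℝ → ℝ}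
    (hf : ContinuousOn f (Icc 0 t)) :
    ContinuousOn (fun r ↦ 2 * f r / (X r ^ 2 + Y r ^ 2)) (Icc 0 t) :=
  (continuousOn_const.mul hf).div ((h.continuousOn_re.pow 2).add (h.continuousOn_im.pow 2))
    fun r hr ↦ by have := h.im_pos r hr; positivity

lemma hasDerivWithinAt_drift (h : IsReverseLoewnerFlow β y t X Y) (hs : s ∈ Icc 0 t) :
    HasDerivWithinAt (fun s ↦ β s - X s) (2 * X s / (X s ^ 2 + Y s ^ 2)) (Icc 0 t) s := by
  have hcont := h.continuousOn_two_mul_div h.continuousOn_re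
  refine (hasDerivWithinAt_integral_of_continuousOn hcont hs).congr_of_mem (fun r hr ↦ ?_) hs
  rw [h.re_eq r hr, sub_sub_cancel]

lemma hasDerivWithinAt_im (h : IsReverseLoewnerFlow β y t X Y) (hs : s ∈ Icc 0 t) :
    HasDerivWithinAt Y (2 * Y s / (X s ^ 2 + Y s ^ 2)) (Icc 0 t) s := by
  have hcont := h.continuousOn_two_mul_div h.continuousOn_im
  exact ((hasDerivWithinAt_integral_of_continuousOn hcont hs).const_add y).congr_of_mem h.im_eq hs

lemma re_le_mul_im (h : IsReverseLoewnerFlow β y t X Y) (hpair : IsConePair σ ℓ K)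
    (hβ0 : β 0 ≤ 0)
    (hβ : ∀ r ∈ Icc 0 t, ∀ s ∈ Icc 0 t, r ≤ s → β s - β r ≤ σ * √(s - r)) (hs : s ∈ Icc 0 t) :
    X s ≤ ℓ * exp K * Y s := by
  have hYs := h.im_pos s hs
  rcases le_total (X s) 0 with hneg | hpos
  · exact hneg.trans (by have := hpair.pos; positivity)
  have hX0 : X 0 ≤ 0 := by
    rwa [h.re_eq 0 (left_mem_Icc.2 (hs.1.trans hs.2)), integral_same, sub_zero]
  obtain ⟨a, ha, hXa, hX⟩ := exists_eq_and_forall_Icc_ge_of_continuousOn hs.1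
    (h.continuousOn_re.mono (Icc_subset_Icc_right hs.2)) hX0 hpos
  have hsub : Icc a s ⊆ Icc 0 t := Icc_subset_Icc ha.1 hs.2
  refine hpair.le_mul_exp_mul_of_excursion ha.2
    (fun u hu ↦ (h.hasDerivWithinAt_drift (hsub hu)).mono hsub)
    (fun u hu ↦ (h.hasDerivWithinAt_im (hsub hu)).mono hsub) hX
    (fun u hu ↦ h.im_pos u (hsub hu)) fun u hu ↦ ?_
  have := hβ a (hsub (left_mem_Icc.2 ha.2)) u (hsub hu) hu.1
  linarith

lemma abs_re_le_mul_im (h : IsReverseLoewnerFlow β y t X Y) (hpair : IsConePair σ ℓ K)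
    (hβ0 : β 0 = 0) (hβ : ∀ r ∈ Icc 0 t, ∀ s ∈ Icc 0 t, |β s - β r| ≤ σ * √|s - r|)
    (hs : s ∈ Icc 0 t) : |X s| ≤ ℓ * exp K * Y s := by
  refine abs_le'.2 ⟨h.re_le_mul_im hpair hβ0.le (fun r hr s hs hrs ↦ ?_) hs,
    h.neg.re_le_mul_im hpair (by rw [hβ0, neg_zero]) (fun r hr s hs hrs ↦ ?_) hs⟩
  · simpa only [abs_of_nonneg (sub_nonneg.2 hrs)] using (le_abs_self _).trans (hβ r hr s hs)
  · simpa only [abs_of_nonneg (sub_nonneg.2 hrs), neg_sub, neg_sub_neg] using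
      (neg_le_abs _).trans (hβ r hr s hs)

end IsReverseLoewnerFlow

section ConePairs

variable {σ p : ℝ}

lemma isConePair_of_four_thirds_le (hσ0 : 0 < σ) (hσ : σ < 4) (hp : 4 / 3 ≤ p)
    (hσp : σ * (1 + p) ≤ 4 * p) : IsConePair σ (σ * (1 + p) / √(16 - σ ^ 2)) p := by
  have h16 : 0 < 16 - σ ^ 2 := by nlinarith
  have hσp2 : σ ^ 2 * (1 + p) ^ 2 ≤ (4 * p) ^ 2 := by
    rw [← mul_pow]
    gcongr
  have hℓ2 : (σ * (1 + p) / √(16 - σ ^ 2)) ^ 2 = σ ^ 2 * (1 + p) ^ 2 / (16 - σ ^ 2) := by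
    rw [div_pow, mul_pow, sq_sqrt h16.le]
  refine ⟨by positivity, by linarith, ?_, ?_⟩
  · have hp2 : 4 + p ≤ (1 + p) ^ 2 := by nlinarith
    rw [hℓ2, mul_div_assoc', le_div_iff₀ h16]
    calc (4 + p) * σ ^ 2 * (16 - σ ^ 2) ≤ (1 + p) ^ 2 * σ ^ 2 * 16 := by
          gcongr
          exact sub_le_self _ (sq_nonneg σ)
      _ = 16 * (σ ^ 2 * (1 + p) ^ 2) := by ring
  · have hp3 : (4 + p) * (p ^ 2 + 1) ≤ (2 + p) * (1 + p) ^ 2 := by nlinarith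
    rw [hℓ2, div_add_one h16.ne', mul_div_assoc', mul_div_assoc', div_le_div_iff_of_pos_right h16]
    calc (4 + p) * σ ^ 2 * (σ ^ 2 * (1 + p) ^ 2 + (16 - σ ^ 2))
        ≤ (4 + p) * σ ^ 2 * ((4 * p) ^ 2 + 16) := by
          gcongr
          exact sub_le_self _ (sq_nonneg σ)
      _ = 16 * σ ^ 2 * ((4 + p) * (p ^ 2 + 1)) := by ring
      _ ≤ 16 * σ ^ 2 * ((2 + p) * (1 + p) ^ 2) := by gcongr
      _ = 16 * (2 + p) * (σ ^ 2 * (1 + p) ^ 2) := by ring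

lemma isConePair_zero {m : ℝ} (hσ0 : 0 < σ) (hσ : 3 * σ ^ 2 ≤ 16) (hm : 2 ≤ m) :
    IsConePair σ (σ * m / √(16 - σ ^ 2)) 0 := by
  have h16 : 0 < 16 - σ ^ 2 := by nlinarith
  have hm2 : 4 ≤ m ^ 2 := by nlinarith
  have hℓ2 : (σ * m / √(16 - σ ^ 2)) ^ 2 = σ ^ 2 * m ^ 2 / (16 - σ ^ 2) := by
    rw [div_pow, mul_pow, sq_sqrt h16.le]
  refine ⟨by positivity, le_rfl, ?_, ?_⟩
  · rw [hℓ2, mul_div_assoc', le_div_iff₀ h16]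
    calc (4 + 0) * σ ^ 2 * (16 - σ ^ 2) ≤ 4 * σ ^ 2 * 16 := by
          rw [add_zero]
          gcongr
          exact sub_le_self _ (sq_nonneg σ)
      _ ≤ m ^ 2 * σ ^ 2 * 16 := by gcongr
      _ = 16 * (σ ^ 2 * m ^ 2) := by ring
  · have hkey : σ ^ 2 * m ^ 2 + (16 - σ ^ 2) ≤ 8 * m ^ 2 := by nlinarith
    rw [hℓ2, div_add_one h16.ne', mul_div_assoc', mul_div_assoc', div_le_div_iff_of_pos_right h16]
    calc (4 + 0) * σ ^ 2 * (σ ^ 2 * m ^ 2 + (16 - σ ^ 2)) ≤ (4 + 0) * σ ^ 2 * (8 * m ^ 2) := by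
          gcongr
      _ = 16 * (2 + 0) * (σ ^ 2 * m ^ 2) := by ring

lemma exists_isConePair (hσ0 : 0 < σ) (hσ : σ < 4) (hp : σ / (4 - σ) ≤ p)
    (hp_exp : 2 ≤ (1 + p) * exp p) :
    ∃ ℓ K, IsConePair σ ℓ K ∧ ℓ * exp K = σ * (1 + p) * exp p / √(16 - σ ^ 2) := by
  have hσ4 : 0 < 4 - σ := sub_pos.2 hσ
  have hσp : σ ≤ p * (4 - σ) := (div_le_iff₀ hσ4).1 hp
  -- `K = p` works once `4 + p ≤ (1 + p) ^ 2`, that is `p ≥ (√13 - 1) / 2 ≈ 1.303`; `K = 0` works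
  -- while `3 * σ ^ 2 ≤ 16`, which the bound `σ ≤ 4 * p / (1 + p)` ensures up to `p ≈ 1.366`.
  rcases le_total (4 / 3) p with hp43 | hp43
  · exact ⟨_, p, isConePair_of_four_thirds_le hσ0 hσ hp43 (by linarith), by ring⟩
  · have hσ_small : 7 * σ ≤ 16 := by nlinarith [mul_le_mul_of_nonneg_right hp43 hσ4.le]
    exact ⟨_, 0, isConePair_zero hσ0 (by nlinarith) hp_exp, by rw [exp_zero]; ring⟩

lemma two_le_one_add_mul_exp (hp : 0 ≤ p)
    (hp_pos : 0 < 16 * p ^ 2 - σ ^ 2 * (p + 1) ^ 2)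
    (hp_le : √(16 - σ ^ 2) / √(16 * p ^ 2 - σ ^ 2 * (p + 1) ^ 2) ≤ exp p) :
    2 ≤ (1 + p) * exp p := by
  have hsqrt : √(16 * p ^ 2 - σ ^ 2 * (p + 1) ^ 2) ≤ p * √(16 - σ ^ 2) := by
    rw [← sqrt_sq hp, ← sqrt_mul (sq_nonneg p), sqrt_sq hp]
    exact sqrt_le_sqrt (by nlinarith [mul_nonneg (sq_nonneg σ) hp])
  have hpexp : 1 ≤ p * exp p := by
    calc 1 ≤ p * √(16 - σ ^ 2) / √(16 * p ^ 2 - σ ^ 2 * (p + 1) ^ 2) :=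
          (one_le_div (sqrt_pos.2 hp_pos)).2 hsqrt
      _ ≤ p * exp p := by
          rw [mul_div_assoc]
          gcongr
  linarith [one_le_exp hp]

end ConePairs

theorem reverse_flow_cone_bound_general {σ t : ℝ} (hσ0 : 0 < σ) (hσ : σ < 4)
    {β : ℝ → ℝ} (hβ0 : β 0 = 0)
    (hβ : ∀ r ∈ Icc 0 t, ∀ s ∈ Icc 0 t, |β s - β r| ≤ σ * √|s - r|)
    {y : ℝ} {X Y : ℝ → ℝ} (h : IsReverseLoewnerFlow β y t X Y)
    {p : ℝ} (hp : σ / (4 - σ) ≤ p) (hp_exp : 2 ≤ (1 + p) * exp p) :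
    ∀ s ∈ Icc 0 t, |X s| ≤ σ * (1 + p) * exp p / √(16 - σ ^ 2) * Y s := by
  intro s hs
  obtain ⟨ℓ, K, hpair, hL⟩ := exists_isConePair hσ0 hσ hp hp_exp
  exact hL ▸ h.abs_re_le_mul_im hpair hβ0 hβ hs

/-- Cone bound for the reverse Loewner flow in the full range `0 < σ < 4`:
`|X(s)| ≤ L_σ·Y(s)` with `L_σ = σ(1+p)e^p/√(16−σ²)` where `p` solves
`e^p = √(16−σ²)/√(16p² − σ²(p+1)²)`. -/
theorem reverse_flow_cone_bound
    (σ t : ℝ) (hσ0 : 0 < σ) (ht : 0 < t)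
    (β : ℝ → ℝ) (hβcont : ContinuousOn β (Icc 0 t)) (hβ0 : β 0 = 0)
    (hβlip : ∀ r ∈ Icc (0 : ℝ) t, ∀ s ∈ Icc (0 : ℝ) t, |β s - β r| ≤ σ * Real.sqrt |s - r|)
    (y : ℝ) (hy : 0 < y)
    (X Y : ℝ → ℝ)
    (hXcont : ContinuousOn X (Icc 0 t)) (hYcont : ContinuousOn Y (Icc 0 t))
    (hYpos : ∀ s ∈ Icc (0 : ℝ) t, 0 < Y s)
    (hX : ∀ s ∈ Icc (0 : ℝ) t,
      X s = β s - ∫ r in (0 : ℝ)..s, 2 * X r / (X r ^ 2 + Y r ^ 2))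
    (hY : ∀ s ∈ Icc (0 : ℝ) t,
      Y s = y + ∫ r in (0 : ℝ)..s, 2 * Y r / (X r ^ 2 + Y r ^ 2))
    (hσ : σ < 4)
    (p : ℝ) (hp_mem : p ∈ Ioi (σ / (4 - σ)))
    (hp_pos : 0 < 16 * p ^ 2 - σ ^ 2 * (p + 1) ^ 2)
    (hp_eq : Real.exp p =
      Real.sqrt (16 - σ ^ 2) / Real.sqrt (16 * p ^ 2 - σ ^ 2 * (p + 1) ^ 2))
    (L : ℝ) (hL : L = σ * (1 + p) * Real.exp p / Real.sqrt (16 - σ ^ 2)) :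
    ∀ s ∈ Icc (0 : ℝ) t, |X s| ≤ L * Y s := by
  subst hL
  exact reverse_flow_cone_bound_general hσ0 hσ hβ0 hβlip ⟨hXcont, hYcont, hYpos, hX, hY⟩ hp_mem.le
    (two_le_one_add_mul_exp ((div_pos hσ0 (sub_pos.2 hσ)).trans hp_mem).le hp_pos hp_eq.ge)
end

section
/- Assume the reverse Loewner flow setup with 0 < σ < 4√2/π. Then | 4·∫₀ᵗ X(r)·Y(r)/(X(r)² + Y(r)²)² dr | ≤ (πσ·√(64 − π²σ²)/64)·log(y² + 4t) + (πσ·√(64 − π²σ²)/32)·log(1/y). -/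
open Set MeasureTheory intervalIntegral Real

/-!
Since `∂ₛ log Y = 2/(X² + Y²)`, the integrand `4XY/(X² + Y²)²` is `2 sin θ cos θ · ∂ₛ log Y` with
`tan θ = X/Y`, so everything reduces to bounding `|sin θ|` by `m = πσ/8`; the range of `σ` makes
`m ≤ 1/√2`, where `sin θ cos θ` is monotone in `θ`.

For the bound on `|sin θ|`, take the time `s` at which `cos² θ` is minimal. Integrating by parts,
`X(s) Y(s) = β(s) y + ∫₀ˢ (β(s) - β(u)) dY(u)`. As `∂ᵤ Y² = 4 cos² θ(u) ≥ 4 cos² θ(s)`, the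
Hölder condition gives `|β(s) - β(u)| ≤ σ √(Y(s)² - Y(u)²) / (2 cos θ(s))`. Substituting
`v = Y(u)`, and comparing `β(s) y` with an integral over `0 ≤ v ≤ y`, one bounds the right-hand side
of the identity by `σ / (2 cos θ(s))` times the area `π Y(s)² / 4` of a quarter disc; this is
`|sin θ(s)| ≤ πσ/8`.
-/

theorem hasDerivAt_of_eqOn_add_integral {E : Type*} [NormedAddCommGroup E] [NormedSpace ℝ E]
    [CompleteSpace E] {a b : ℝ} {c : E} {f F : ℝ → E} (hf : ContinuousOn f (Icc a b))
    (hF : EqOn F (fun s ↦ c + ∫ r in a..s, f r) (Icc a b)) {s : ℝ} (hs : s ∈ Ioo a b) :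
    HasDerivAt F (f s) s := by
  have hnhds : Icc a b ∈ nhds s := Icc_mem_nhds hs.1 hs.2
  have hint : IntervalIntegrable f volume a s :=
    (hf.mono (Icc_subset_Icc_right hs.2.le)).intervalIntegrable_of_Icc hs.1.le
  have hmeas : StronglyMeasurableAtFilter f (nhds s) :=
    nhdsWithin_eq_nhds.2 hnhds ▸ hf.stronglyMeasurableAtFilter_nhdsWithin measurableSet_Icc s
  have hprim := (integral_hasDerivAt_right hint hmeas (hf.continuousAt hnhds)).const_add c
  exact hprim.congr_of_eventuallyEq (hF.eventuallyEq_of_mem hnhds)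

theorem integral_zero_one_sqrt_one_sub_sq : ∫ v in (0 : ℝ)..1, √(1 - v ^ 2) = π / 4 := by
  have hcont : Continuous fun v : ℝ ↦ √(1 - v ^ 2) := by fun_prop
  have hsplit := integral_add_adjacent_intervals (μ := volume) (hcont.intervalIntegrable (-1) 0)
    (hcont.intervalIntegrable 0 1)
  have heven : ∫ v in (-1 : ℝ)..0, √(1 - v ^ 2) = ∫ v in (0 : ℝ)..1, √(1 - v ^ 2) := by
    have hreflect := integral_comp_neg (a := 0) (b := 1) fun v : ℝ ↦ √(1 - v ^ 2)
    simp only [neg_sq, neg_zero] at hreflect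
    exact hreflect.symm
  rw [heven, integral_sqrt_one_sub_sq] at hsplit
  linarith

theorem integral_zero_sqrt_sq_sub_sq {R : ℝ} (hR : 0 ≤ R) :
    ∫ v in (0 : ℝ)..R, √(R ^ 2 - v ^ 2) = π * R ^ 2 / 4 := by
  have hscale (v : ℝ) : √(R ^ 2 - (R * v) ^ 2) = R * √(1 - v ^ 2) := by
    rw [show R ^ 2 - (R * v) ^ 2 = R ^ 2 * (1 - v ^ 2) by ring, sqrt_mul (sq_nonneg R), sqrt_sq hR]
  calc ∫ v in (0 : ℝ)..R, √(R ^ 2 - v ^ 2)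
      = R * ∫ v in (0 : ℝ)..1, √(R ^ 2 - (R * v) ^ 2) := by
        simpa only [mul_zero, mul_one] using
          (mul_integral_comp_mul_left (a := 0) (b := 1) (c := R)
            (f := fun v ↦ √(R ^ 2 - v ^ 2))).symm
    _ = π * R ^ 2 / 4 := by
        simp only [hscale, intervalIntegral.integral_const_mul, integral_zero_one_sqrt_one_sub_sq]
        ring

theorem mul_sqrt_sq_sub_sq_le_integral (R : ℝ) {y : ℝ} (hy : 0 ≤ y) :
    y * √(R ^ 2 - y ^ 2) ≤ ∫ v in (0 : ℝ)..y, √(R ^ 2 - v ^ 2) := by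
  have hcont : Continuous fun v : ℝ ↦ √(R ^ 2 - v ^ 2) := by fun_prop
  calc y * √(R ^ 2 - y ^ 2) = ∫ _ in (0 : ℝ)..y, √(R ^ 2 - y ^ 2) := by simp
    _ ≤ ∫ v in (0 : ℝ)..y, √(R ^ 2 - v ^ 2) :=
        integral_mono_on hy intervalIntegrable_const (hcont.intervalIntegrable _ _) fun v hv ↦
          sqrt_le_sqrt (sub_le_sub_left (pow_le_pow_left₀ hv.1 hv.2 2) _)

theorem abs_mul_le_of_sq_le_mul_sq_add_sq {a b m : ℝ} (hm : 0 ≤ m) (hm2 : m ^ 2 ≤ 1 / 2)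
    (ha : a ^ 2 ≤ m ^ 2 * (a ^ 2 + b ^ 2)) :
    |a * b| ≤ m * √(1 - m ^ 2) * (a ^ 2 + b ^ 2) := by
  have ha' : a ^ 2 ≤ (1 - m ^ 2) * (a ^ 2 + b ^ 2) :=
    ha.trans (mul_le_mul_of_nonneg_right (by linarith) (by positivity))
  refine abs_le_of_sq_le_sq ?_ (by positivity)
  rw [mul_pow _ (a ^ 2 + b ^ 2), mul_pow m, sq_sqrt (by linarith)]
  linarith [mul_nonneg (sub_nonneg.2 ha) (sub_nonneg.2 ha')]

theorem pi_mul_div_eight_sq_le_half {σ : ℝ} (hσ0 : 0 ≤ σ) (hσ : σ ≤ 4 * √2 / π) :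
    (π * σ / 8) ^ 2 ≤ 1 / 2 := by
  have hm : π * σ / 8 ≤ √2 / 2 := by
    rw [le_div_iff₀ pi_pos] at hσ
    linarith
  calc (π * σ / 8) ^ 2 ≤ (√2 / 2) ^ 2 := by gcongr
    _ = 1 / 2 := by rw [div_pow, sq_sqrt zero_le_two]; norm_num

theorem pi_mul_sqrt_div_sixty_four (σ : ℝ) :
    π * σ * √(64 - π ^ 2 * σ ^ 2) / 64 = π * σ / 8 * √(1 - (π * σ / 8) ^ 2) := by
  rw [show 64 - π ^ 2 * σ ^ 2 = 8 ^ 2 * (1 - (π * σ / 8) ^ 2) by ring, sqrt_mul (by positivity),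
    sqrt_sq (by positivity)]
  ring

/-- `X + iY` is the reverse Loewner flow on `[0, t]` of the continuous driver `β` with `β 0 = 0`,
started at `iy`: the integrated form of `Z' = β' - 2/Z`, which requires no differentiability
of `β`, written in real and imaginary parts. -/
structure IsReverseLoewnerFlow_s14 (β X Y : ℝ → ℝ) (t y : ℝ) : Prop where
  continuousOn_driver : ContinuousOn β (Icc 0 t)
  driver_zero : β 0 = 0
  continuousOn_re : ContinuousOn X (Icc 0 t)
  continuousOn_im : ContinuousOn Y (Icc 0 t)
  im_pos : ∀ s ∈ Icc (0 : ℝ) t, 0 < Y s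
  re_eq : ∀ s ∈ Icc (0 : ℝ) t, X s = β s - ∫ r in (0 : ℝ)..s, 2 * X r / (X r ^ 2 + Y r ^ 2)
  im_eq : ∀ s ∈ Icc (0 : ℝ) t, Y s = y + ∫ r in (0 : ℝ)..s, 2 * Y r / (X r ^ 2 + Y r ^ 2)

namespace IsReverseLoewnerFlow_s14

variable {β X Y : ℝ → ℝ} {s t u y σ : ℝ}

theorem re_zero (h : IsReverseLoewnerFlow_s14 β X Y t y) (ht : 0 ≤ t) : X 0 = 0 := by
  simpa [h.driver_zero] using h.re_eq 0 (left_mem_Icc.2 ht)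

theorem im_zero (h : IsReverseLoewnerFlow_s14 β X Y t y) (ht : 0 ≤ t) : Y 0 = y := by
  simpa using h.im_eq 0 (left_mem_Icc.2 ht)

theorem start_pos (h : IsReverseLoewnerFlow_s14 β X Y t y) (ht : 0 ≤ t) : 0 < y :=
  h.im_zero ht ▸ h.im_pos 0 (left_mem_Icc.2 ht)

theorem sq_add_sq_pos (h : IsReverseLoewnerFlow_s14 β X Y t y) (hs : s ∈ Icc 0 t) :
    0 < X s ^ 2 + Y s ^ 2 :=
  add_pos_of_nonneg_of_pos (sq_nonneg _) (pow_pos (h.im_pos s hs) 2)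

theorem continuousOn_div_sq_add_sq (h : IsReverseLoewnerFlow_s14 β X Y t y) {g : ℝ → ℝ}
    (hg : ContinuousOn g (Icc 0 t)) : ContinuousOn (fun r ↦ g r / (X r ^ 2 + Y r ^ 2)) (Icc 0 t) :=
  hg.div ((h.continuousOn_re.pow 2).add (h.continuousOn_im.pow 2)) fun _ hr ↦
    (h.sq_add_sq_pos hr).ne'

theorem continuousOn_im_velocity (h : IsReverseLoewnerFlow_s14 β X Y t y) :
    ContinuousOn (fun r ↦ 2 * Y r / (X r ^ 2 + Y r ^ 2)) (Icc 0 t) :=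
  h.continuousOn_div_sq_add_sq (continuousOn_const.mul h.continuousOn_im)

theorem im_velocity_nonneg (h : IsReverseLoewnerFlow_s14 β X Y t y) (hs : s ∈ Icc 0 t) :
    0 ≤ 2 * Y s / (X s ^ 2 + Y s ^ 2) :=
  div_nonneg (mul_nonneg zero_le_two (h.im_pos s hs).le) (h.sq_add_sq_pos hs).le

theorem hasDerivAt_im (h : IsReverseLoewnerFlow_s14 β X Y t y) (hs : s ∈ Ioo 0 t) :
    HasDerivAt Y (2 * Y s / (X s ^ 2 + Y s ^ 2)) s :=
  hasDerivAt_of_eqOn_add_integral h.continuousOn_im_velocity h.im_eq hs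

theorem hasDerivAt_re_sub_driver (h : IsReverseLoewnerFlow_s14 β X Y t y) (hs : s ∈ Ioo 0 t) :
    HasDerivAt (fun r ↦ X r - β r) (-(2 * X s / (X s ^ 2 + Y s ^ 2))) s := by
  have hcont : ContinuousOn (fun r ↦ -(2 * X r / (X r ^ 2 + Y r ^ 2))) (Icc 0 t) :=
    (h.continuousOn_div_sq_add_sq (continuousOn_const.mul h.continuousOn_re)).neg
  refine hasDerivAt_of_eqOn_add_integral (c := 0) hcont (fun r hr ↦ ?_) hs
  simp only [intervalIntegral.integral_neg, h.re_eq r hr]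
  ring

theorem hasDerivAt_im_sq (h : IsReverseLoewnerFlow_s14 β X Y t y) (hs : s ∈ Ioo 0 t) :
    HasDerivAt (fun r ↦ Y r ^ 2) (4 * (Y s ^ 2 / (X s ^ 2 + Y s ^ 2))) s := by
  refine ((h.hasDerivAt_im hs).pow 2).congr_deriv ?_
  push_cast
  ring

theorem mul_sub_le_im_sq_sub_im_sq (h : IsReverseLoewnerFlow_s14 β X Y t y) {c : ℝ}
    (hc : ∀ r ∈ Icc 0 t, c ≤ Y r ^ 2 / (X r ^ 2 + Y r ^ 2)) (hs : s ∈ Icc 0 t)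
    (hu : u ∈ Icc 0 s) : 4 * c * (s - u) ≤ Y s ^ 2 - Y u ^ 2 := by
  refine (convex_Icc 0 t).mul_sub_le_image_sub_of_le_deriv (h.continuousOn_im.pow 2)
    (fun r hr ↦ ?_) (fun r hr ↦ ?_) u ⟨hu.1, hu.2.trans hs.2⟩ s hs hu.2 <;> rw [interior_Icc] at hr
  · exact (h.hasDerivAt_im_sq hr).differentiableAt.differentiableWithinAt
  · change 4 * c ≤ deriv (fun r ↦ Y r ^ 2) r
    rw [(h.hasDerivAt_im_sq hr).deriv]
    linarith [hc r (Ioo_subset_Icc_self hr)]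

theorem im_sq_le (h : IsReverseLoewnerFlow_s14 β X Y t y) (ht : 0 ≤ t) : Y t ^ 2 ≤ y ^ 2 + 4 * t := by
  have hgrowth : Y t ^ 2 - Y 0 ^ 2 ≤ 4 * (t - 0) := by
    refine (convex_Icc 0 t).image_sub_le_mul_sub_of_deriv_le (h.continuousOn_im.pow 2)
      (fun r hr ↦ ?_) (fun r hr ↦ ?_) 0 (left_mem_Icc.2 ht) t (right_mem_Icc.2 ht) ht <;>
      rw [interior_Icc] at hr
    · exact (h.hasDerivAt_im_sq hr).differentiableAt.differentiableWithinAt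
    · change deriv (fun r ↦ Y r ^ 2) r ≤ 4
      have hcos : Y r ^ 2 / (X r ^ 2 + Y r ^ 2) ≤ 1 :=
        div_le_one_of_le₀ (le_add_of_nonneg_left (sq_nonneg _)) (by positivity)
      rw [(h.hasDerivAt_im_sq hr).deriv]
      linarith
  rw [h.im_zero ht] at hgrowth
  linarith

theorem integral_comp_im (h : IsReverseLoewnerFlow_s14 β X Y t y) {g : ℝ → ℝ}
    (hg : ContinuousOn g (Ioi 0)) (hs : s ∈ Icc 0 t) :
    ∫ r in (0 : ℝ)..s, g (Y r) * (2 * Y r / (X r ^ 2 + Y r ^ 2)) = ∫ v in y..Y s, g v := by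
  have hsub : uIcc 0 s ⊆ Icc 0 t := uIcc_of_le hs.1 ▸ Icc_subset_Icc_right hs.2
  rw [← h.im_zero (hs.1.trans hs.2)]
  refine integral_comp_mul_deriv'' (h.continuousOn_im.mono hsub) (fun r hr ↦ ?_)
    (h.continuousOn_im_velocity.mono hsub)
    (hg.mono (image_subset_iff.2 fun r hr ↦ h.im_pos r (hsub hr)))
  rw [min_eq_left hs.1, max_eq_right hs.1] at hr
  exact (h.hasDerivAt_im (Ioo_subset_Ioo_right hs.2 hr)).hasDerivWithinAt

theorem integral_two_div_sq_add_sq (h : IsReverseLoewnerFlow_s14 β X Y t y) (ht : 0 ≤ t) :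
    ∫ r in (0 : ℝ)..t, 2 / (X r ^ 2 + Y r ^ 2) = log (Y t / y) := by
  rw [← integral_inv_of_pos (h.start_pos ht) (h.im_pos t (right_mem_Icc.2 ht)),
    ← h.integral_comp_im (continuousOn_inv₀.mono fun _ hv ↦ (mem_Ioi.1 hv).ne')
      (right_mem_Icc.2 ht)]
  refine integral_congr fun r hr ↦ ?_
  have hYr := h.im_pos r (uIcc_of_le ht ▸ hr)
  field_simp

theorem re_mul_im_eq (h : IsReverseLoewnerFlow_s14 β X Y t y) (hs : s ∈ Icc 0 t) :
    X s * Y s = β s * y +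
      ∫ u in (0 : ℝ)..s, (β s - β u) * (2 * Y u / (X u ^ 2 + Y u ^ 2)) := by
  have hsub : Icc 0 s ⊆ Icc 0 t := Icc_subset_Icc_right hs.2
  have hβ := h.continuousOn_driver
  have hX := h.continuousOn_re
  have hY := h.continuousOn_im
  have hcont : ContinuousOn (fun u ↦ (X u - β u) * Y u + β s * Y u) (Icc 0 t) := by fun_prop
  have hderiv : ∀ u ∈ Ioo 0 s, HasDerivAt (fun u ↦ (X u - β u) * Y u + β s * Y u)
      ((β s - β u) * (2 * Y u / (X u ^ 2 + Y u ^ 2))) u := fun u hu ↦ by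
    have hu' := Ioo_subset_Ioo_right hs.2 hu
    refine (((h.hasDerivAt_re_sub_driver hu').mul (h.hasDerivAt_im hu')).add
      ((h.hasDerivAt_im hu').const_mul (β s))).congr_deriv ?_
    ring
  have hint : ContinuousOn (fun u ↦ (β s - β u) * (2 * Y u / (X u ^ 2 + Y u ^ 2))) (Icc 0 t) :=
    (continuousOn_const.sub hβ).mul h.continuousOn_im_velocity
  rw [integral_eq_sub_of_hasDerivAt_of_le hs.1 (hcont.mono hsub) hderiv
    ((hint.mono hsub).intervalIntegrable_of_Icc hs.1), h.re_zero (hs.1.trans hs.2),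
    h.im_zero (hs.1.trans hs.2), h.driver_zero]
  ring

theorem abs_integral_driver_sub_le (h : IsReverseLoewnerFlow_s14 β X Y t y) {g : ℝ → ℝ}
    (hg : ContinuousOn g (Ioi 0)) (hs : s ∈ Icc 0 t)
    (hβ : ∀ u ∈ Icc 0 s, |β s - β u| ≤ g (Y u)) :
    |∫ u in (0 : ℝ)..s, (β s - β u) * (2 * Y u / (X u ^ 2 + Y u ^ 2))| ≤ ∫ v in y..Y s, g v := by
  have hsub : Icc 0 s ⊆ Icc 0 t := Icc_subset_Icc_right hs.2
  have hcont : ContinuousOn (fun u ↦ g (Y u) * (2 * Y u / (X u ^ 2 + Y u ^ 2))) (Icc 0 t) :=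
    (hg.comp h.continuousOn_im h.im_pos).mul h.continuousOn_im_velocity
  rw [← h.integral_comp_im hg hs, ← norm_eq_abs]
  refine norm_integral_le_of_norm_le hs.1 (.of_forall fun u hu ↦ ?_)
    ((hcont.mono hsub).intervalIntegrable_of_Icc hs.1)
  have hvel := h.im_velocity_nonneg (hsub (Ioc_subset_Icc_self hu))
  rw [norm_mul, norm_of_nonneg hvel]
  exact mul_le_mul_of_nonneg_right (hβ u (Ioc_subset_Icc_self hu)) hvel

theorem abs_re_le_of_driver_sub_le (h : IsReverseLoewnerFlow_s14 β X Y t y) {L : ℝ} (hL : 0 ≤ L)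
    (hs : s ∈ Icc 0 t) (hβ : ∀ u ∈ Icc 0 s, |β s - β u| ≤ L * √(Y s ^ 2 - Y u ^ 2)) :
    |X s| ≤ L * (π / 4) * Y s := by
  have ht : 0 ≤ t := hs.1.trans hs.2
  have hy := h.start_pos ht
  have hYs := h.im_pos s hs
  have hcont : Continuous fun v : ℝ ↦ L * √(Y s ^ 2 - v ^ 2) := by fun_prop
  have hstart : |β s| * y ≤ ∫ v in (0 : ℝ)..y, L * √(Y s ^ 2 - v ^ 2) := by
    have hβs := hβ 0 (left_mem_Icc.2 hs.1)
    rw [h.driver_zero, sub_zero, h.im_zero ht] at hβs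
    calc |β s| * y ≤ L * √(Y s ^ 2 - y ^ 2) * y := by gcongr
      _ = L * (y * √(Y s ^ 2 - y ^ 2)) := by ring
      _ ≤ L * ∫ v in (0 : ℝ)..y, √(Y s ^ 2 - v ^ 2) := by
          gcongr; exact mul_sqrt_sq_sub_sq_le_integral (Y s) hy.le
      _ = ∫ v in (0 : ℝ)..y, L * √(Y s ^ 2 - v ^ 2) :=
          (intervalIntegral.integral_const_mul _ _).symm
  refine le_of_mul_le_mul_right ?_ hYs
  calc |X s| * Y s
      = |β s * y + ∫ u in (0 : ℝ)..s, (β s - β u) * (2 * Y u / (X u ^ 2 + Y u ^ 2))| := by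
        rw [← h.re_mul_im_eq hs, abs_mul, abs_of_pos hYs]
    _ ≤ |β s| * y + |∫ u in (0 : ℝ)..s, (β s - β u) * (2 * Y u / (X u ^ 2 + Y u ^ 2))| :=
        (abs_add_le _ _).trans_eq (by rw [abs_mul, abs_of_pos hy])
    _ ≤ (∫ v in (0 : ℝ)..y, L * √(Y s ^ 2 - v ^ 2)) + ∫ v in y..Y s, L * √(Y s ^ 2 - v ^ 2) :=
        add_le_add hstart (h.abs_integral_driver_sub_le hcont.continuousOn hs hβ)
    _ = ∫ v in (0 : ℝ)..Y s, L * √(Y s ^ 2 - v ^ 2) :=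
        integral_add_adjacent_intervals (hcont.intervalIntegrable _ _)
          (hcont.intervalIntegrable _ _)
    _ = L * (π / 4) * Y s * Y s := by
        rw [intervalIntegral.integral_const_mul, integral_zero_sqrt_sq_sub_sq hYs.le]; ring

theorem re_sq_le_of_isMinOn (h : IsReverseLoewnerFlow_s14 β X Y t y) (hσ : 0 ≤ σ)
    (hs : s ∈ Icc 0 t) (hβ : ∀ u ∈ Icc 0 s, |β s - β u| ≤ σ * √(s - u))
    (hmin : IsMinOn (fun r ↦ Y r ^ 2 / (X r ^ 2 + Y r ^ 2)) (Icc 0 t) s) :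
    X s ^ 2 ≤ (π * σ / 8) ^ 2 * (X s ^ 2 + Y s ^ 2) := by
  have hq := h.sq_add_sq_pos hs
  have hYs := h.im_pos s hs
  set ρ := √(X s ^ 2 + Y s ^ 2)
  have hρ0 : 0 < ρ := sqrt_pos.2 hq
  have hρ2 : ρ ^ 2 = X s ^ 2 + Y s ^ 2 := sq_sqrt hq.le
  have htime : ∀ u ∈ Icc 0 s, √(s - u) ≤ ρ / (2 * Y s) * √(Y s ^ 2 - Y u ^ 2) := fun u hu ↦ by
    have hgrowth := h.mul_sub_le_im_sq_sub_im_sq (fun r hr ↦ hmin hr) hs hu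
    calc √(s - u) = √((ρ / (2 * Y s)) ^ 2 * (4 * (Y s ^ 2 / ρ ^ 2) * (s - u))) := by
          congr 1; field_simp; ring
      _ ≤ √((ρ / (2 * Y s)) ^ 2 * (Y s ^ 2 - Y u ^ 2)) := by rw [hρ2]; gcongr
      _ = ρ / (2 * Y s) * √(Y s ^ 2 - Y u ^ 2) := by
          rw [sqrt_mul (sq_nonneg _), sqrt_sq (by positivity)]
  have hXs : |X s| ≤ σ * (ρ / (2 * Y s)) * (π / 4) * Y s :=
    h.abs_re_le_of_driver_sub_le (by positivity) hs fun u hu ↦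
      (hβ u hu).trans ((mul_le_mul_of_nonneg_left (htime u hu) hσ).trans_eq (mul_assoc ..).symm)
  calc X s ^ 2 = |X s| ^ 2 := (sq_abs _).symm
    _ ≤ (σ * (ρ / (2 * Y s)) * (π / 4) * Y s) ^ 2 := by gcongr
    _ = (π * σ / 8) ^ 2 * ρ ^ 2 := by field_simp; ring
    _ = (π * σ / 8) ^ 2 * (X s ^ 2 + Y s ^ 2) := by rw [hρ2]

theorem re_sq_le (h : IsReverseLoewnerFlow_s14 β X Y t y) (hσ : 0 ≤ σ)
    (hβ : ∀ r ∈ Icc (0 : ℝ) t, ∀ s ∈ Icc (0 : ℝ) t, |β s - β r| ≤ σ * √|s - r|)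
    (hu : u ∈ Icc 0 t) : X u ^ 2 ≤ (π * σ / 8) ^ 2 * (X u ^ 2 + Y u ^ 2) := by
  obtain ⟨s, hs, hmin⟩ := isCompact_Icc.exists_isMinOn ⟨u, hu⟩
    (h.continuousOn_div_sq_add_sq (h.continuousOn_im.pow 2))
  have hXs := h.re_sq_le_of_isMinOn hσ hs (fun r hr ↦ by
    simpa only [abs_of_nonneg (sub_nonneg.2 hr.2)] using
      hβ r (Icc_subset_Icc_right hs.2 hr) s hs) hmin
  have hYu : 1 - (π * σ / 8) ^ 2 ≤ Y u ^ 2 / (X u ^ 2 + Y u ^ 2) :=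
    calc 1 - (π * σ / 8) ^ 2 ≤ Y s ^ 2 / (X s ^ 2 + Y s ^ 2) := by
          rw [le_div_iff₀ (h.sq_add_sq_pos hs)]; linarith
      _ ≤ Y u ^ 2 / (X u ^ 2 + Y u ^ 2) := hmin hu
  rw [le_div_iff₀ (h.sq_add_sq_pos hu)] at hYu
  linarith

theorem abs_winding_le (h : IsReverseLoewnerFlow_s14 β X Y t y) (ht : 0 ≤ t) {K : ℝ}
    (hK : ∀ r ∈ Icc 0 t, |X r * Y r| ≤ K * (X r ^ 2 + Y r ^ 2)) :
    |4 * ∫ r in (0 : ℝ)..t, X r * Y r / (X r ^ 2 + Y r ^ 2) ^ 2| ≤ 2 * K * log (Y t / y) := by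
  rw [← h.integral_two_div_sq_add_sq ht, ← intervalIntegral.integral_const_mul,
    ← intervalIntegral.integral_const_mul, ← norm_eq_abs]
  have hcont : ContinuousOn (fun r ↦ 2 * K * (2 / (X r ^ 2 + Y r ^ 2))) (Icc 0 t) :=
    continuousOn_const.mul (h.continuousOn_div_sq_add_sq continuousOn_const)
  refine norm_integral_le_of_norm_le ht (.of_forall fun r hr ↦ ?_)
    (hcont.intervalIntegrable_of_Icc ht)
  have hr' := Ioc_subset_Icc_self hr
  have hq := h.sq_add_sq_pos hr'
  calc ‖4 * (X r * Y r / (X r ^ 2 + Y r ^ 2) ^ 2)‖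
      = 4 * (|X r * Y r| / (X r ^ 2 + Y r ^ 2) ^ 2) := by
        rw [norm_eq_abs, abs_mul, abs_div, abs_of_pos (pow_pos hq 2), abs_of_pos four_pos]
    _ ≤ 4 * (K * (X r ^ 2 + Y r ^ 2) / (X r ^ 2 + Y r ^ 2) ^ 2) := by gcongr; exact hK r hr'
    _ = 2 * K * (2 / (X r ^ 2 + Y r ^ 2)) := by field_simp; ring

theorem two_mul_log_im_div_le (h : IsReverseLoewnerFlow_s14 β X Y t y) (ht : 0 ≤ t) :
    2 * log (Y t / y) ≤ log (y ^ 2 + 4 * t) + 2 * log (1 / y) := by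
  have hYt := h.im_pos t (right_mem_Icc.2 ht)
  have hlog : 2 * log (Y t) ≤ log (y ^ 2 + 4 * t) := by
    simpa only [log_pow, Nat.cast_ofNat] using log_le_log (pow_pos hYt 2) (h.im_sq_le ht)
  rw [log_div hYt.ne' (h.start_pos ht).ne', one_div, log_inv]
  linarith

end IsReverseLoewnerFlow_s14

/-- Winding-rate estimate for the reverse Loewner flow in the range `0 < σ < 4√2/π`:
`|4∫₀ᵗ XY/(X²+Y²)² dr| ≤ (πσ√(64−π²σ²)/64)·log(y²+4t) + (πσ√(64−π²σ²)/32)·log(1/y)`. -/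
theorem reverse_flow_winding_bound
    (σ t : ℝ) (hσ0 : 0 < σ) (ht : 0 < t)
    (β : ℝ → ℝ) (hβcont : ContinuousOn β (Icc 0 t)) (hβ0 : β 0 = 0)
    (hβlip : ∀ r ∈ Icc (0 : ℝ) t, ∀ s ∈ Icc (0 : ℝ) t, |β s - β r| ≤ σ * Real.sqrt |s - r|)
    (y : ℝ) (hy : 0 < y)
    (X Y : ℝ → ℝ)
    (hXcont : ContinuousOn X (Icc 0 t)) (hYcont : ContinuousOn Y (Icc 0 t))
    (hYpos : ∀ s ∈ Icc (0 : ℝ) t, 0 < Y s)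
    (hX : ∀ s ∈ Icc (0 : ℝ) t,
      X s = β s - ∫ r in (0 : ℝ)..s, 2 * X r / (X r ^ 2 + Y r ^ 2))
    (hY : ∀ s ∈ Icc (0 : ℝ) t,
      Y s = y + ∫ r in (0 : ℝ)..s, 2 * Y r / (X r ^ 2 + Y r ^ 2))
    (hσ : σ < 4 * Real.sqrt 2 / Real.pi) :
    |4 * ∫ r in (0 : ℝ)..t, X r * Y r / (X r ^ 2 + Y r ^ 2) ^ 2| ≤
      Real.pi * σ * Real.sqrt (64 - Real.pi ^ 2 * σ ^ 2) / 64 * Real.log (y ^ 2 + 4 * t) +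
        Real.pi * σ * Real.sqrt (64 - Real.pi ^ 2 * σ ^ 2) / 32 * Real.log (1 / y) := by
  have hflow : IsReverseLoewnerFlow_s14 β X Y t y :=
    ⟨hβcont, hβ0, hXcont, hYcont, hYpos, hX, hY⟩
  have hm2 := pi_mul_div_eight_sq_le_half hσ0.le hσ.le
  set K := π * σ / 8 * √(1 - (π * σ / 8) ^ 2)
  have hcoef : π * σ * √(64 - π ^ 2 * σ ^ 2) / 64 = K := pi_mul_sqrt_div_sixty_four σ
  have hK0 : 0 ≤ K := by positivity
  have hXY : ∀ r ∈ Icc 0 t, |X r * Y r| ≤ K * (X r ^ 2 + Y r ^ 2) := fun r hr ↦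
    abs_mul_le_of_sq_le_mul_sq_add_sq (by positivity) hm2 (hflow.re_sq_le hσ0.le hβlip hr)
  calc |4 * ∫ r in (0 : ℝ)..t, X r * Y r / (X r ^ 2 + Y r ^ 2) ^ 2|
      ≤ 2 * K * log (Y t / y) := hflow.abs_winding_le ht.le hXY
    _ = K * (2 * log (Y t / y)) := by ring
    _ ≤ K * (log (y ^ 2 + 4 * t) + 2 * log (1 / y)) :=
        mul_le_mul_of_nonneg_left (hflow.two_mul_log_im_div_le ht.le) hK0
    _ = _ := by rw [← hcoef]; ring
end

section
/- Assume the Loewner chain setup with 0 < σ < 4. Let p ∈ (σ/(4−σ), ∞) satisfy e^p = √(16−σ²)/√(16p² − σ²(p+1)²), and set L_σ = σ·(1+p)·e^p/√(16−σ²). Then, for every t ∈ [0,1], |Re γ(t)| ≤ L_σ·Im γ(t). -/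
open Set MeasureTheory intervalIntegral Real

/-!
Reversing time, `f t (dr t + iε)` is the endpoint of the trajectory of the backward flow
`∂ₛ w = -2 / (w - ξ)`, `ξ s = dr (t - s)`, started at `dr t + iε`, so it suffices to bound the slope
of `w t - ξ t`. By reflection we may assume that `w` ends to the right of `ξ`. Let `α` be the last
time at which `re w = ξ`, and at later times write
`a = (re w α - re w s) / √(s - α)`, `U = (re w s - ξ s) / √(s - α)`, `Y = (im w s)² / (s - α)`.
The flow pushes `w` to the left, so `a ≥ 0`, and the Hölder bound gives `a + U ≤ σ`. The quantity
`-log Y - 2 a / (4 - σ)` decreases while `Y ≤ 4 - σ`, because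
`(U² + 4 - σ) (4 - U) ≤ 4 (4 - σ) + 4 U`. Starting from the last time at which `Y = 4 - σ`, this
yields `4 - σ ≤ exp (2 a / (4 - σ)) Y` at time `t`. Together with `U ≤ σ - a` the slope is at most
`(σ - a) exp (a / (4 - σ)) / √(4 - σ)`, and maximising over `a ∈ [0, σ]` gives the constant.
-/

lemma exists_last_zero {g : ℝ → ℝ} {a b : ℝ} (hab : a ≤ b) (hg : ContinuousOn g (Icc a b))
    (ha : g a ≤ 0) (hb : 0 < g b) :
    ∃ τ ∈ Ico a b, g τ = 0 ∧ ∀ s ∈ Ioc τ b, 0 < g s := by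
  have hcompact : IsCompact (Icc a b ∩ g ⁻¹' {0}) :=
    isCompact_Icc.of_isClosed_subset (hg.preimage_isClosed_of_isClosed isClosed_Icc
      isClosed_singleton) inter_subset_left
  obtain ⟨z, hz, hgz⟩ := intermediate_value_Icc hab hg ⟨ha, hb.le⟩
  obtain ⟨τ, ⟨hτ, hgτ : g τ = 0⟩, hmax⟩ := hcompact.exists_isGreatest ⟨z, hz, hgz⟩
  refine ⟨τ, ⟨hτ.1, hτ.2.lt_of_ne fun h => hb.ne' (h ▸ hgτ)⟩, hgτ, fun s hs => ?_⟩
  by_contra! hgs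
  have hsub : Icc s b ⊆ Icc a b := Icc_subset_Icc_left (hτ.1.trans hs.1.le)
  obtain ⟨z, hz, hgz⟩ := intermediate_value_Icc hs.2 (hg.mono hsub) ⟨hgs, hb.le⟩
  exact (hs.1.trans_le hz.1).not_ge (hmax ⟨hsub hz, hgz⟩)

lemma two_add_mul_le_one_add_mul_exp {p d : ℝ} (hp : 0 < p) (hpe : 1 ≤ p * exp p)
    (hd0 : 0 ≤ d) (hd1 : d ≤ 1) : (2 + p) * d ≤ (1 + p) * exp (p * d) := by
  rcases le_total p 1 with hp1 | hp1
  · have hdp : d * exp p ≤ exp (p * d) := calc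
      d * exp p ≤ exp (d - 1) * exp p := by
        gcongr
        linarith [add_one_le_exp (d - 1)]
      _ = exp (d - 1 + p) := (exp_add _ _).symm
      _ ≤ exp (p * d) := exp_le_exp.2 (by nlinarith)
    calc (2 + p) * d ≤ ((1 + p) * exp p) * d := by
          gcongr
          linarith [add_one_le_exp p]
      _ = (1 + p) * (d * exp p) := by ring
      _ ≤ (1 + p) * exp (p * d) := by gcongr
  · calc
      (2 + p) * d ≤ (1 + p) * ((1 + p) * d) := by
        nlinarith [mul_nonneg hd0 (sub_nonneg.2 hp1), mul_nonneg (mul_nonneg hd0 hp.le) hp.le]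
      _ ≤ (1 + p) * exp (p * d) := by
        gcongr
        linarith [add_one_le_exp (p * d)]

lemma sub_mul_exp_mul_sqrt_le {σ p a : ℝ} (hσ0 : 0 < σ) (hσ4 : σ < 4) (hp : σ / (4 - σ) ≤ p)
    (hpe : 1 ≤ p * exp p) (ha0 : 0 ≤ a) (haσ : a ≤ σ) :
    (σ - a) * exp (a / (4 - σ)) * √(4 + σ) ≤ σ * (1 + p) * exp p := by
  have h4 : 0 < 4 - σ := sub_pos.2 hσ4
  have hp0 : 0 < p := (div_pos hσ0 h4).trans_le hp
  have hsqrt : √(4 + σ) ≤ 2 + p := by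
    rw [div_le_iff₀ h4] at hp
    exact sqrt_le_iff.2 ⟨by positivity, by nlinarith⟩
  obtain ⟨d, rfl⟩ : ∃ d, a = σ * (1 - d) := ⟨1 - a / σ, by simp [mul_div_cancel₀ _ hσ0.ne']⟩
  have hd1 : d ≤ 1 := by nlinarith
  have hd0 : 0 ≤ d := by nlinarith
  have hexp : exp (σ * (1 - d) / (4 - σ)) ≤ exp (p * (1 - d)) := by
    rw [mul_div_right_comm]
    gcongr
  calc (σ - σ * (1 - d)) * exp (σ * (1 - d) / (4 - σ)) * √(4 + σ)
      = σ * d * exp (σ * (1 - d) / (4 - σ)) * √(4 + σ) := by ring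
    _ ≤ σ * d * exp (p * (1 - d)) * (2 + p) := by gcongr
    _ = σ * exp (p * (1 - d)) * ((2 + p) * d) := by ring
    _ ≤ σ * exp (p * (1 - d)) * ((1 + p) * exp (p * d)) := by
      gcongr σ * exp (p * (1 - d)) * ?_
      exact two_add_mul_le_one_add_mul_exp hp0 hpe hd0 hd1
    _ = σ * (1 + p) * (exp (p * (1 - d)) * exp (p * d)) := by ring
    _ = σ * (1 + p) * exp p := by rw [← exp_add]; ring_nf

lemma one_le_mul_exp_of_exp_eq {σ p : ℝ} (hσ0 : 0 < σ) (hσ4 : σ < 4) (hp : σ / (4 - σ) < p)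
    (hpe : exp p = √(16 - σ ^ 2) / √(16 * p ^ 2 - σ ^ 2 * (p + 1) ^ 2)) : 1 ≤ p * exp p := by
  have h4 : 0 < 4 - σ := sub_pos.2 hσ4
  have hp0 : 0 < p := (div_pos hσ0 h4).trans hp
  have hnum : 0 < 16 - σ ^ 2 := by nlinarith
  have hden : 0 < 16 * p ^ 2 - σ ^ 2 * (p + 1) ^ 2 := by
    rw [div_lt_iff₀ h4] at hp
    have : 0 < (4 * p - σ * (p + 1)) * (4 * p + σ * (p + 1)) :=
      mul_pos (by linarith) (by positivity)
    linarith
  -- The squared equation reads `16 ((p e^p)² - 1) = σ² (((p + 1) e^p)² - 1)`.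
  have hsq : exp p ^ 2 * (16 * p ^ 2 - σ ^ 2 * (p + 1) ^ 2) = 16 - σ ^ 2 := by
    rw [hpe, div_pow, sq_sqrt hnum.le, sq_sqrt hden.le, div_mul_cancel₀ _ hden.ne']
  have hone : 1 ≤ ((p + 1) * exp p) ^ 2 :=
    one_le_pow₀ (one_le_mul_of_one_le_of_one_le (by linarith) (one_le_exp hp0.le))
  have : 1 ^ 2 ≤ (p * exp p) ^ 2 := by nlinarith [sq_nonneg σ]
  exact (sq_le_sq₀ zero_le_one (by positivity)).1 this

lemma barrier_inequality {σ a U Y : ℝ} (hσ4 : σ < 4) (ha : 0 ≤ a) (hU : 0 ≤ U) (haU : a + U ≤ σ)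
    (hY : Y ≤ 4 - σ) : (U ^ 2 + Y) * (4 - σ + a) ≤ 4 * (4 - σ) + 4 * U :=
  calc (U ^ 2 + Y) * (4 - σ + a) ≤ (U ^ 2 + (4 - σ)) * (4 - U) := by
        gcongr
        linarith
    _ = 4 * (4 - σ) + 4 * U - U * ((U - 2) ^ 2 + (4 - σ)) := by ring
    _ ≤ 4 * (4 - σ) + 4 * U := sub_le_self _ (by positivity)

lemma energy_rate_nonpos {σ a u v r : ℝ} (hσ4 : σ < 4) (ha : 0 ≤ a) (hu : 0 ≤ u) (hr : 0 < r)
    (hv : 0 < v) (hau : a + u / r ≤ σ) (hvr : v ≤ (4 - σ) * r ^ 2) :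
    1 / r ^ 2 - 4 / (u ^ 2 + v)
      - 2 / (4 - σ) * (2 * u / (u ^ 2 + v) / r - a / (2 * r ^ 2)) ≤ 0 := by
  have h4 : 0 < 4 - σ := sub_pos.2 hσ4
  have hbarrier := barrier_inequality hσ4 ha (div_nonneg hu hr.le) hau
    ((div_le_iff₀ (by positivity)).2 hvr)
  calc
    1 / r ^ 2 - 4 / (u ^ 2 + v) - 2 / (4 - σ) * (2 * u / (u ^ 2 + v) / r - a / (2 * r ^ 2))
      = (((u / r) ^ 2 + v / r ^ 2) * (4 - σ + a) - (4 * (4 - σ) + 4 * (u / r)))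
        / ((4 - σ) * (u ^ 2 + v)) := by
      field_simp
      ring
    _ ≤ 0 := div_nonpos_of_nonpos_of_nonneg (sub_nonpos.2 hbarrier) (by positivity)

lemma holderOnWith_half_iff {σ : ℝ} {ξ : ℝ → ℝ} {S : Set ℝ} (hσ : 0 ≤ σ) :
    HolderOnWith σ.toNNReal (1 / 2) ξ S ↔ ∀ s ∈ S, ∀ u ∈ S, |ξ u - ξ s| ≤ σ * √|u - s| := by
  refine ⟨fun h s hs u hu => ?_, fun h s hs u hu => ?_⟩
  · simpa [Real.dist_eq, hσ, sqrt_eq_rpow] using h.dist_le hu hs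
  · rw [edist_dist, edist_dist, ENNReal.ofReal_rpow_of_nonneg dist_nonneg (by positivity),
      ENNReal.ofNNReal_toNNReal, ← ENNReal.ofReal_mul hσ]
    refine ENNReal.ofReal_le_ofReal ?_
    simpa [Real.dist_eq, sqrt_eq_rpow] using h u hu s hs

/-- `w` follows, on `[0, t]` and inside the upper half-plane, the backward Loewner flow
`∂ₛ w = -2 / (w - ξ)` with driving function `ξ`. -/
structure IsBackwardTrajectory (ξ : ℝ → ℝ) (t : ℝ) (w : ℝ → ℂ) : Prop where
  im_pos : ∀ s ∈ Icc 0 t, 0 < (w s).im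
  hasDerivWithinAt : ∀ s ∈ Icc 0 t, HasDerivWithinAt w (-(2 / (w s - (ξ s : ℂ)))) (Icc 0 t) s

namespace IsBackwardTrajectory

variable {ξ : ℝ → ℝ} {t : ℝ} {w : ℝ → ℂ}

lemma continuousOn (hw : IsBackwardTrajectory ξ t w) : ContinuousOn w (Icc 0 t) :=
  fun s hs => (hw.hasDerivWithinAt s hs).continuousWithinAt

lemma sq_add_sq_pos (hw : IsBackwardTrajectory ξ t w) {s : ℝ} (hs : s ∈ Icc 0 t) :
    0 < ((w s).re - ξ s) ^ 2 + (w s).im ^ 2 := by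
  have := hw.im_pos s hs
  positivity

lemma hasDerivAt (hw : IsBackwardTrajectory ξ t w) {s : ℝ} (hs : s ∈ Ioo 0 t) :
    HasDerivAt w (-(2 / (w s - (ξ s : ℂ)))) s :=
  (hw.hasDerivWithinAt s (Ioo_subset_Icc_self hs)).hasDerivAt (Icc_mem_nhds hs.1 hs.2)

lemma hasDerivAt_re (hw : IsBackwardTrajectory ξ t w) {s : ℝ} (hs : s ∈ Ioo 0 t) :
    HasDerivAt (fun s => (w s).re)
      (-(2 * ((w s).re - ξ s) / (((w s).re - ξ s) ^ 2 + (w s).im ^ 2))) s := by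
  refine (Complex.reCLM.hasFDerivAt.comp_hasDerivAt s (hw.hasDerivAt hs)).congr_deriv ?_
  simp [Complex.div_re, Complex.normSq_apply, sq]

lemma hasDerivAt_im (hw : IsBackwardTrajectory ξ t w) {s : ℝ} (hs : s ∈ Ioo 0 t) :
    HasDerivAt (fun s => (w s).im)
      (2 * (w s).im / (((w s).re - ξ s) ^ 2 + (w s).im ^ 2)) s := by
  refine (Complex.imCLM.hasFDerivAt.comp_hasDerivAt s (hw.hasDerivAt hs)).congr_deriv ?_
  simp [Complex.div_im, Complex.normSq_apply, sq]

lemma reflect (hw : IsBackwardTrajectory ξ t w) :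
    IsBackwardTrajectory (fun s => -ξ s) t (fun s => -star (w s)) where
  im_pos s hs := by simpa using hw.im_pos s hs
  hasDerivWithinAt s hs := by
    refine (hw.hasDerivWithinAt s hs).star.neg.congr_deriv ?_
    rw [show -star (w s) - ((-ξ s : ℝ) : ℂ) = -star (w s - (ξ s : ℂ)) by simp; ring, div_neg]
    simp

end IsBackwardTrajectory

/-- `α` is the last time before `t` at which the backward trajectory `w` is vertically above
its driving function, and `w` stays to the right of the driving function afterwards. -/
structure IsExcursionStart (ξ : ℝ → ℝ) (t : ℝ) (w : ℝ → ℂ) (α : ℝ) : Prop where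
  mem : α ∈ Ico 0 t
  re_eq : (w α).re = ξ α
  lt_re : ∀ s ∈ Ioc α t, ξ s < (w s).re

/-- The leftward displacement of `w` since time `α`, in units of the Brownian scale
`√(s - α)`. -/
noncomputable def scaledDisplacement (w : ℝ → ℂ) (α s : ℝ) : ℝ :=
  ((w α).re - (w s).re) / √(s - α)

/-- A Lyapunov function for excursions starting at `α`: it decreases in `s` as long as
`(w s).im ^ 2 ≤ (4 - σ) * (s - α)`. -/
noncomputable def excursionEnergy (σ : ℝ) (w : ℝ → ℂ) (α s : ℝ) : ℝ :=
  log (s - α) - 2 * log (w s).im - 2 / (4 - σ) * scaledDisplacement w α s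

lemma IsBackwardTrajectory.exists_isExcursionStart {ξ : ℝ → ℝ} {t : ℝ} {w : ℝ → ℂ}
    (hw : IsBackwardTrajectory ξ t w) (hξ : ContinuousOn ξ (Icc 0 t)) (ht : 0 ≤ t)
    (h0 : (w 0).re = ξ 0) (hlt : ξ t < (w t).re) : ∃ α, IsExcursionStart ξ t w α := by
  have hcont : ContinuousOn (fun s => (w s).re - ξ s) (Icc 0 t) :=
    (Complex.continuous_re.comp_continuousOn hw.continuousOn).sub hξ
  obtain ⟨α, hα, hzero, hpos⟩ :=
    exists_last_zero ht hcont (sub_nonpos.2 h0.le) (sub_pos.2 hlt)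
  exact ⟨α, hα, sub_eq_zero.1 hzero, fun s hs => sub_pos.1 (hpos s hs)⟩

namespace IsExcursionStart

variable {σ t α s : ℝ} {ξ : ℝ → ℝ} {w : ℝ → ℂ}

lemma Icc_subset (hα : IsExcursionStart ξ t w α) : Icc α t ⊆ Icc 0 t :=
  Icc_subset_Icc_left hα.mem.1

lemma re_antitoneOn (hα : IsExcursionStart ξ t w α) (hw : IsBackwardTrajectory ξ t w) :
    AntitoneOn (fun s => (w s).re) (Icc α t) := by
  have hcont := Complex.continuous_re.comp_continuousOn (hw.continuousOn.mono hα.Icc_subset)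
  refine antitoneOn_of_hasDerivWithinAt_nonpos (convex_Icc α t) hcont
    (f' := fun s => -(2 * ((w s).re - ξ s) / (((w s).re - ξ s) ^ 2 + (w s).im ^ 2))) ?_ ?_ <;>
    rw [interior_Icc] <;> intro s hs
  · exact (hw.hasDerivAt_re ⟨hα.mem.1.trans_lt hs.1, hs.2⟩).hasDerivWithinAt
  · have := (sub_pos.2 (hα.lt_re s (Ioo_subset_Ioc_self hs))).le
    exact neg_nonpos.2 (by positivity)

lemma scaledDisplacement_nonneg (hα : IsExcursionStart ξ t w α)
    (hw : IsBackwardTrajectory ξ t w) (hs : s ∈ Ioc α t) : 0 ≤ scaledDisplacement w α s :=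
  div_nonneg (sub_nonneg.2 (hα.re_antitoneOn hw (left_mem_Icc.2 hα.mem.2.le)
    (Ioc_subset_Icc_self hs) hs.1.le)) (sqrt_nonneg _)

lemma scaledDisplacement_add_le (hα : IsExcursionStart ξ t w α)
    (hξ : HolderOnWith σ.toNNReal (1 / 2) ξ (Icc 0 t)) (hσ0 : 0 ≤ σ) (hs : s ∈ Ioc α t) :
    scaledDisplacement w α s + ((w s).re - ξ s) / √(s - α) ≤ σ := by
  have hq : 0 < s - α := sub_pos.2 hs.1
  rw [scaledDisplacement, ← add_div, hα.re_eq, sub_add_sub_cancel, div_le_iff₀ (sqrt_pos.2 hq)]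
  calc ξ α - ξ s ≤ |ξ α - ξ s| := le_abs_self _
    _ ≤ σ * √|α - s| := (holderOnWith_half_iff hσ0).1 hξ s
      (hα.Icc_subset (Ioc_subset_Icc_self hs)) α ⟨hα.mem.1, hα.mem.2.le⟩
    _ = σ * √(s - α) := by rw [abs_sub_comm, abs_of_pos hq]

lemma hasDerivAt_scaledDisplacement (hα : IsExcursionStart ξ t w α)
    (hw : IsBackwardTrajectory ξ t w) (hs : s ∈ Ioo α t) :
    HasDerivAt (scaledDisplacement w α)
      (2 * ((w s).re - ξ s) / (((w s).re - ξ s) ^ 2 + (w s).im ^ 2) / √(s - α)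
        - scaledDisplacement w α s / (2 * (s - α))) s := by
  have hq : 0 < s - α := sub_pos.2 hs.1
  have hsqrt : √(s - α) ^ 2 = s - α := sq_sqrt hq.le
  have hq' : √(s - α) ≠ 0 := (sqrt_pos.2 hq).ne'
  have hT := hw.sq_add_sq_pos (hα.Icc_subset (Ioo_subset_Icc_self hs))
  have hden : HasDerivAt (fun s => √(s - α)) (1 / (2 * √(s - α))) s :=
    ((hasDerivAt_id s).sub_const α).sqrt hq.ne'
  refine (((hw.hasDerivAt_re ⟨hα.mem.1.trans_lt hs.1, hs.2⟩).const_sub _).div hden hq').congr_deriv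
    ?_
  rw [scaledDisplacement, ← hsqrt, sqrt_sq (sqrt_nonneg _)]
  field_simp

lemma hasDerivAt_excursionEnergy (hα : IsExcursionStart ξ t w α)
    (hw : IsBackwardTrajectory ξ t w) (hs : s ∈ Ioo α t) :
    HasDerivAt (excursionEnergy σ w α)
      (1 / (s - α) - 4 / (((w s).re - ξ s) ^ 2 + (w s).im ^ 2)
        - 2 / (4 - σ) * (2 * ((w s).re - ξ s) / (((w s).re - ξ s) ^ 2 + (w s).im ^ 2) / √(s - α)
          - scaledDisplacement w α s / (2 * (s - α)))) s := by
  have hs0 : s ∈ Ioo 0 t := ⟨hα.mem.1.trans_lt hs.1, hs.2⟩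
  have hy := (hw.im_pos s (Ioo_subset_Icc_self hs0)).ne'
  have hq : HasDerivAt (fun s => log (s - α)) (1 / (s - α)) s :=
    ((hasDerivAt_id s).sub_const α).log (sub_pos.2 hs.1).ne'
  refine ((hq.sub (((hw.hasDerivAt_im hs0).log hy).const_mul 2)).sub
    ((hα.hasDerivAt_scaledDisplacement hw hs).const_mul (2 / (4 - σ)))).congr_deriv ?_
  congr 2
  field_simp
  norm_num

lemma antitoneOn_excursionEnergy (hα : IsExcursionStart ξ t w α)
    (hw : IsBackwardTrajectory ξ t w)
    (hξ : HolderOnWith σ.toNNReal (1 / 2) ξ (Icc 0 t)) (hσ0 : 0 ≤ σ) (hσ4 : σ < 4)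
    {τ : ℝ} (hτ : α < τ) (hy : ∀ s ∈ Ioo τ t, (w s).im ^ 2 ≤ (4 - σ) * (s - α)) :
    AntitoneOn (excursionEnergy σ w α) (Icc τ t) := by
  have hcont : ContinuousOn (excursionEnergy σ w α) (Icc τ t) := by
    have hw' : ContinuousOn w (Icc τ t) :=
      hw.continuousOn.mono (Icc_subset_Icc_left (hα.mem.1.trans hτ.le))
    have hq : ∀ s ∈ Icc τ t, s - α ≠ 0 := fun s hs => (sub_pos.2 (hτ.trans_le hs.1)).ne'
    have him : ∀ s ∈ Icc τ t, (w s).im ≠ 0 := fun s hs =>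
      (hw.im_pos s ⟨(hα.mem.1.trans hτ.le).trans hs.1, hs.2⟩).ne'
    have hsqrt : ∀ s ∈ Icc τ t, √(s - α) ≠ 0 := fun s hs =>
      (sqrt_pos.2 (sub_pos.2 (hτ.trans_le hs.1))).ne'
    unfold excursionEnergy scaledDisplacement
    fun_prop (disch := assumption)
  refine antitoneOn_of_hasDerivWithinAt_nonpos (convex_Icc τ t) hcont (f' := fun s =>
    1 / (s - α) - 4 / (((w s).re - ξ s) ^ 2 + (w s).im ^ 2)
      - 2 / (4 - σ) * (2 * ((w s).re - ξ s) / (((w s).re - ξ s) ^ 2 + (w s).im ^ 2) / √(s - α)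
        - scaledDisplacement w α s / (2 * (s - α)))) ?_ ?_ <;> rw [interior_Icc] <;> intro s hs
  · exact (hα.hasDerivAt_excursionEnergy hw ⟨hτ.trans hs.1, hs.2⟩).hasDerivWithinAt
  have hαs : s ∈ Ioc α t := ⟨hτ.trans hs.1, hs.2.le⟩
  have hq : 0 < s - α := sub_pos.2 hαs.1
  have hsq : √(s - α) ^ 2 = s - α := sq_sqrt hq.le
  have hrate := energy_rate_nonpos hσ4 (hα.scaledDisplacement_nonneg hw hαs)
    (sub_pos.2 (hα.lt_re s hαs)).le (sqrt_pos.2 hq)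
    (pow_pos (hw.im_pos s (hα.Icc_subset (Ioc_subset_Icc_self hαs))) 2)
    (hα.scaledDisplacement_add_le hξ hσ0 hαs) (hsq.symm ▸ hy s hs)
  rwa [hsq] at hrate

lemma elapsed_le (hα : IsExcursionStart ξ t w α) (hw : IsBackwardTrajectory ξ t w)
    (hξ : HolderOnWith σ.toNNReal (1 / 2) ξ (Icc 0 t)) (hσ0 : 0 ≤ σ) (hσ4 : σ < 4) :
    (4 - σ) * (t - α) ≤ exp (2 / (4 - σ) * scaledDisplacement w α t) * (w t).im ^ 2 := by
  have h4 : 0 < 4 - σ := sub_pos.2 hσ4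
  have hlt : α < t := hα.mem.2
  have hyt := hw.im_pos t (hα.Icc_subset (right_mem_Icc.2 hlt.le))
  have hat := hα.scaledDisplacement_nonneg hw (right_mem_Ioc.2 hlt)
  rcases le_or_gt ((4 - σ) * (t - α)) ((w t).im ^ 2) with hle | hgt
  · exact hle.trans (le_mul_of_one_le_left (sq_nonneg _) (one_le_exp (by positivity)))
  have hcont : ContinuousOn (fun s => (4 - σ) * (s - α) - (w s).im ^ 2) (Icc α t) := by
    have := hw.continuousOn.mono hα.Icc_subset
    fun_prop
  obtain ⟨τ, hτ, hzero, hpos⟩ := exists_last_zero hlt.le hcont (by simp [sq_nonneg])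
    (sub_pos.2 hgt)
  have hyτ := hw.im_pos τ (hα.Icc_subset ⟨hτ.1, hτ.2.le⟩)
  have hατ : α < τ := by
    refine sub_pos.1 (pos_of_mul_pos_right ?_ h4.le)
    rw [sub_eq_zero.1 hzero]
    positivity
  have hmono := hα.antitoneOn_excursionEnergy hw hξ hσ0 hσ4 hατ
    (fun s hs => (sub_pos.1 (hpos s ⟨hs.1, hs.2.le⟩)).le) (left_mem_Icc.2 hτ.2.le)
    (right_mem_Icc.2 hτ.2.le) hτ.2.le
  have haτ := hα.scaledDisplacement_nonneg hw ⟨hατ, hτ.2.le⟩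
  have hlogτ : log (4 - σ) + log (τ - α) = 2 * log (w τ).im := by
    rw [← log_mul h4.ne' (sub_pos.2 hατ).ne', sub_eq_zero.1 hzero, log_pow, Nat.cast_ofNat]
  have hdec : 0 ≤ 2 / (4 - σ) * scaledDisplacement w α τ := by positivity
  have hpt : 0 < t - α := sub_pos.2 hlt
  rw [← log_le_log_iff (by positivity) (by positivity), log_mul h4.ne' hpt.ne',
    log_mul (exp_ne_zero _) (by positivity), log_exp, log_pow, Nat.cast_ofNat]
  unfold excursionEnergy at hmono
  linarith

lemma re_sub_le (hα : IsExcursionStart ξ t w α) (hw : IsBackwardTrajectory ξ t w)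
    (hξ : HolderOnWith σ.toNNReal (1 / 2) ξ (Icc 0 t)) (hσ0 : 0 ≤ σ) (hσ4 : σ < 4) :
    √(4 - σ) * ((w t).re - ξ t) ≤ (σ - scaledDisplacement w α t)
      * exp (scaledDisplacement w α t / (4 - σ)) * (w t).im := by
  have h4 : 0 < 4 - σ := sub_pos.2 hσ4
  have ht : t ∈ Ioc α t := right_mem_Ioc.2 hα.mem.2
  have hr : 0 < √(t - α) := sqrt_pos.2 (sub_pos.2 ht.1)
  have hyt := hw.im_pos t (hα.Icc_subset (Ioc_subset_Icc_self ht))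
  have hu : (w t).re - ξ t ≤ (σ - scaledDisplacement w α t) * √(t - α) :=
    (div_le_iff₀ hr).1 (le_sub_iff_add_le'.2 (hα.scaledDisplacement_add_le hξ hσ0 ht))
  have haσ : 0 ≤ σ - scaledDisplacement w α t :=
    (pos_of_mul_pos_left ((sub_pos.2 (hα.lt_re t ht)).trans_le hu) hr.le).le
  have helapsed : √(4 - σ) * √(t - α)
      ≤ exp (scaledDisplacement w α t / (4 - σ)) * (w t).im := by
    rw [← sqrt_mul h4.le]
    refine sqrt_le_iff.2 ⟨by positivity, (hα.elapsed_le hw hξ hσ0 hσ4).trans_eq ?_⟩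
    rw [mul_pow, ← exp_nat_mul]
    ring_nf
  calc √(4 - σ) * ((w t).re - ξ t)
      ≤ √(4 - σ) * ((σ - scaledDisplacement w α t) * √(t - α)) := by gcongr
    _ = (σ - scaledDisplacement w α t) * (√(4 - σ) * √(t - α)) := by ring
    _ ≤ (σ - scaledDisplacement w α t)
        * (exp (scaledDisplacement w α t / (4 - σ)) * (w t).im) := by gcongr
    _ = _ := (mul_assoc _ _ _).symm

end IsExcursionStart

namespace IsBackwardTrajectory

variable {σ p t : ℝ} {ξ : ℝ → ℝ} {w : ℝ → ℂ}

lemma re_sub_le (hw : IsBackwardTrajectory ξ t w)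
    (hξ : HolderOnWith σ.toNNReal (1 / 2) ξ (Icc 0 t)) (ht : 0 ≤ t)
    (h0 : (w 0).re = ξ 0) (hσ0 : 0 < σ) (hσ4 : σ < 4) (hp : σ / (4 - σ) ≤ p)
    (hpe : 1 ≤ p * exp p) :
    (w t).re - ξ t ≤ σ * (1 + p) * exp p / √(16 - σ ^ 2) * (w t).im := by
  have h4 : 0 < 4 - σ := sub_pos.2 hσ4
  have hp0 : 0 < p := (div_pos hσ0 h4).trans_le hp
  have hyt := hw.im_pos t (right_mem_Icc.2 ht)
  rcases le_or_gt (w t).re (ξ t) with hle | hlt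
  · exact (sub_nonpos.2 hle).trans (by positivity)
  obtain ⟨α, hα⟩ := hw.exists_isExcursionStart (hξ.continuousOn (by norm_num)) ht h0 hlt
  have hαt : t ∈ Ioc α t := right_mem_Ioc.2 hα.mem.2
  have ha0 := hα.scaledDisplacement_nonneg hw hαt
  have haσ : scaledDisplacement w α t ≤ σ := by
    have hu : 0 ≤ ((w t).re - ξ t) / √(t - α) := div_nonneg (sub_pos.2 hlt).le (sqrt_nonneg _)
    linarith [hα.scaledDisplacement_add_le hξ hσ0.le hαt]
  have hfactor : √(16 - σ ^ 2) = √(4 + σ) * √(4 - σ) := by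
    rw [← sqrt_mul (by positivity)]
    ring_nf
  rw [div_mul_eq_mul_div, le_div_iff₀ (hfactor ▸ by positivity), hfactor]
  calc ((w t).re - ξ t) * (√(4 + σ) * √(4 - σ))
      = √(4 - σ) * ((w t).re - ξ t) * √(4 + σ) := by ring
    _ ≤ (σ - scaledDisplacement w α t) * exp (scaledDisplacement w α t / (4 - σ))
        * (w t).im * √(4 + σ) := by
      gcongr ?_ * √(4 + σ)
      exact hα.re_sub_le hw hξ hσ0.le hσ4
    _ = (σ - scaledDisplacement w α t) * exp (scaledDisplacement w α t / (4 - σ))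
        * √(4 + σ) * (w t).im := by ring
    _ ≤ σ * (1 + p) * exp p * (w t).im := by
      gcongr ?_ * (w t).im
      exact sub_mul_exp_mul_sqrt_le hσ0 hσ4 hp hpe ha0 haσ

lemma abs_re_sub_le (hw : IsBackwardTrajectory ξ t w)
    (hξ : HolderOnWith σ.toNNReal (1 / 2) ξ (Icc 0 t)) (ht : 0 ≤ t)
    (h0 : (w 0).re = ξ 0) (hσ0 : 0 < σ) (hσ4 : σ < 4) (hp : σ / (4 - σ) ≤ p)
    (hpe : 1 ≤ p * exp p) :
    |(w t).re - ξ t| ≤ σ * (1 + p) * exp p / √(16 - σ ^ 2) * (w t).im := by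
  refine abs_sub_le_iff.2 ⟨hw.re_sub_le hξ ht h0 hσ0 hσ4 hp hpe, ?_⟩
  have hneg : HolderOnWith σ.toNNReal (1 / 2) (fun s => -ξ s) (Icc 0 t) := fun s hs u hu => by
    simpa only [edist_neg_neg] using hξ s hs u hu
  have := hw.reflect.re_sub_le hneg ht (by simp [h0]) hσ0 hσ4 hp hpe
  simpa [neg_add_eq_sub] using this

end IsBackwardTrajectory

section HolomorphicFamilies

open Filter Topology Metric

lemma norm_le_of_mapsTo_upperHalfPlane {g : ℂ → ℂ} {z₀ z : ℂ} {R : ℝ}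
    (hd : DifferentiableOn ℂ g (ball z₀ R)) (hm : MapsTo g (ball z₀ R) {z | 0 < z.im})
    (hz : z ∈ ball z₀ (R / 2)) : ‖g z‖ ≤ 2 + 3 * ‖g z₀‖ := by
  have hn := norm_nonneg (z - z₀)
  have hzR : ‖z - z₀‖ < R / 2 := mem_ball_iff_norm.1 hz
  have hR : 0 < R - ‖z - z₀‖ := by linarith
  have hin : MapsTo (fun ζ => z₀ + ζ) (ball 0 R) (ball z₀ R) := fun ζ hζ => by simpa using hζ
  have hre : MapsTo (fun ζ => Complex.I * g (z₀ + ζ)) (ball 0 R) {z | z.re ≤ 1} := fun ζ hζ => by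
    have : 0 < (g (z₀ + ζ)).im := hm (hin hζ)
    simp only [mem_ofPred_eq, Complex.I_mul_re]
    linarith
  have hBC := Complex.borelCaratheodory (z := z - z₀) one_pos
    ((hd.comp (by fun_prop) hin).const_mul Complex.I) hre (by linarith)
    (by rw [mem_ball_zero_iff]; linarith)
  simp only [Function.comp_apply, norm_mul, Complex.norm_I, one_mul, add_sub_cancel, add_zero,
    mul_one] at hBC
  refine hBC.trans (add_le_add ?_ ?_)
  · rw [div_le_iff₀ hR]
    linarith
  · rw [div_le_iff₀ hR, mul_comm 3, mul_assoc]
    gcongr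
    linarith

lemma dist_dslope_deriv_le {h : ℂ → ℂ} {z₀ z : ℂ} {r B : ℝ}
    (hd : DifferentiableOn ℂ h (ball z₀ r)) (hB : ∀ z ∈ ball z₀ r, ‖h z‖ ≤ B)
    (hz : z ∈ ball z₀ r) :
    dist (dslope h z₀ z) (deriv h z₀) ≤ 4 * B / r ^ 2 * dist z z₀ := by
  have hz₀ : z₀ ∈ ball z₀ r := mem_ball_self (pos_of_mem_ball hz)
  have hslope : ∀ z ∈ ball z₀ r, ‖dslope h z₀ z‖ ≤ 2 * B / r := fun z hz =>
    Complex.norm_dslope_le_div_of_mapsTo_ball hd (fun z hz => by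
      rw [mem_closedBall, two_mul]
      exact (dist_le_norm_add_norm _ _).trans (add_le_add (hB z hz) (hB z₀ hz₀))) hz
  have hdd : DifferentiableOn ℂ (dslope h z₀) (ball z₀ r) :=
    (Complex.differentiableOn_dslope (isOpen_ball.mem_nhds hz₀)).2 hd
  have hmaps : MapsTo (dslope h z₀) (ball z₀ r) (closedBall (dslope h z₀ z₀) (4 * B / r)) :=
    fun z hz => by
      rw [mem_closedBall, show 4 * B / r = 2 * B / r + 2 * B / r by ring]
      exact (dist_le_norm_add_norm _ _).trans (add_le_add (hslope z hz) (hslope z₀ hz₀))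
  have := Complex.dist_le_div_mul_dist_of_mapsTo_ball hdd hmaps hz
  rwa [dslope_same, div_div, ← sq] at this

lemma tendsto_deriv_of_tendsto_of_norm_le {ι : Type*} {l : Filter ι} {g : ι → ℂ → ℂ} {G : ℂ → ℂ}
    {z₀ : ℂ} {r B : ℝ} (hr : 0 < r) (hd : ∀ i, DifferentiableOn ℂ (g i) (ball z₀ r))
    (hB : ∀ i, ∀ z ∈ ball z₀ r, ‖g i z‖ ≤ B) (hG : DifferentiableAt ℂ G z₀)
    (hlim : ∀ z ∈ ball z₀ r, Tendsto (fun i => g i z) l (𝓝 (G z))) :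
    Tendsto (fun i => deriv (g i) z₀) l (𝓝 (deriv G z₀)) := by
  have hequi : EquicontinuousAt (fun i => dslope (g i) z₀) z₀ := by
    refine equicontinuousAt_of_continuity_modulus (fun z => 4 * B / r ^ 2 * dist z z₀) ?_ _ ?_
    · have : Continuous fun z => 4 * B / r ^ 2 * dist z z₀ := by fun_prop
      simpa using this.tendsto z₀
    · filter_upwards [ball_mem_nhds z₀ hr] with z hz i
      rw [dslope_same, dist_comm]
      exact dist_dslope_deriv_le (hd i) (hB i) hz
  have hslope : ∀ z ∈ ball z₀ r \ {z₀},
      Tendsto (fun i => dslope (g i) z₀ z) l (𝓝 (dslope G z₀ z)) := fun z hz => by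
    simp only [dslope_of_ne _ hz.2, slope_def_field]
    exact ((hlim z hz.1).sub (hlim z₀ (mem_ball_self hr))).div_const _
  have hclosure : z₀ ∈ closure (ball z₀ r \ {z₀}) := by
    rw [mem_closure_iff_nhdsWithin_neBot, sdiff_eq, inter_comm,
      nhdsWithin_inter_of_mem' (mem_nhdsWithin_of_mem_nhds (ball_mem_nhds z₀ hr))]
    infer_instance
  have hcont := (continuousAt_dslope_same.2 hG).continuousWithinAt (s := ball z₀ r \ {z₀})
  simpa only [dslope_same] using hequi.tendsto_of_mem_closure hcont hslope hclosure

/- The Schwarz lemma controls `dslope (g u) (w s)` near `w s` uniformly in `u`, so pointwise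
continuity of `u ↦ g u z` replaces joint differentiability of `g`. -/
lemma hasDerivWithinAt_comp_of_norm_le {g : ℝ → ℂ → ℂ} {w : ℝ → ℂ} {a w' : ℂ} {J : Set ℝ}
    {s r B : ℝ} (hs : s ∈ J) (hr : 0 < r) (hd : ∀ u ∈ J, DifferentiableOn ℂ (g u) (ball (w s) r))
    (hB : ∀ u ∈ J, ∀ z ∈ ball (w s) r, ‖g u z‖ ≤ B)
    (hcont : ∀ z ∈ ball (w s) r, ContinuousWithinAt (fun u => g u z) J s)
    (hg : HasDerivWithinAt (fun u => g u (w s)) a J s) (hw : HasDerivWithinAt w w' J s) :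
    HasDerivWithinAt (fun u => g u (w u)) (a + deriv (g s) (w s) * w') J s := by
  have hderiv : Tendsto (fun u => deriv (g u) (w s)) (𝓝[J] s) (𝓝 (deriv (g s) (w s))) := by
    rw [tendsto_nhdsWithin_iff_subtype hs]
    refine tendsto_deriv_of_tendsto_of_norm_le hr (fun u => hd u u.2) (fun u => hB u u.2)
      ((hd s hs).differentiableAt (ball_mem_nhds _ hr)) fun z hz => ?_
    exact (tendsto_nhdsWithin_iff_subtype hs _ _).1 (hcont z hz)
  have hdslope : Tendsto (fun u => dslope (g u) (w s) (w u)) (𝓝[J] s)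
      (𝓝 (deriv (g s) (w s))) := by
    refine tendsto_of_tendsto_of_dist hderiv (squeeze_zero' (.of_forall fun _ => dist_nonneg)
      (g := fun u => 4 * B / r ^ 2 * dist (w u) (w s)) ?_ ?_)
    · filter_upwards [self_mem_nhdsWithin, hw.continuousWithinAt (ball_mem_nhds _ hr)] with u hu huw
      rw [dist_comm]
      exact dist_dslope_deriv_le (hd u hu) (hB u hu) huw
    · simpa using (tendsto_iff_dist_tendsto_zero.1 hw.continuousWithinAt).const_mul (4 * B / r ^ 2)
  rw [hasDerivWithinAt_iff_tendsto_slope] at hg hw ⊢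
  refine (hg.add ((hdslope.mono_left (nhdsWithin_mono s sdiff_subset)).mul hw)).congr fun u => ?_
  have hsplit := sub_smul_dslope (g u) (w s) (w u)
  simp only [slope_def_module, smul_eq_mul] at hsplit ⊢
  rw [mul_smul_comm, mul_comm, hsplit, ← smul_add, add_comm, sub_add_sub_cancel]

end HolomorphicFamilies

/-- Projection of `z` onto `{z | ε ≤ im z}`; composing with it makes the backward Loewner field
globally Lipschitz without changing the trajectories, along which the imaginary part grows. -/
def clampIm (ε : ℝ) (z : ℂ) : ℂ :=
  ⟨z.re, max z.im ε⟩

section ClampIm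

variable {ε : ℝ}

lemma clampIm_of_le {z : ℂ} (hz : ε ≤ z.im) : clampIm ε z = z :=
  Complex.ext rfl (max_eq_left hz)

lemma le_norm_clampIm_sub_ofReal (ε : ℝ) (z : ℂ) (a : ℝ) : ε ≤ ‖clampIm ε z - a‖ :=
  calc ε ≤ (clampIm ε z - a).im := by simp [clampIm]
    _ ≤ ‖clampIm ε z - a‖ := Complex.im_le_norm _

lemma clampIm_sub_ofReal_ne_zero (hε : 0 < ε) (z : ℂ) (a : ℝ) : clampIm ε z - a ≠ 0 :=
  norm_pos_iff.1 (hε.trans_le (le_norm_clampIm_sub_ofReal ε z a))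

lemma norm_clampIm_sub_clampIm_le (ε : ℝ) (z z' : ℂ) :
    ‖clampIm ε z - clampIm ε z'‖ ≤ ‖z - z'‖ := by
  rw [Complex.norm_eq_sqrt_sq_add_sq, Complex.norm_eq_sqrt_sq_add_sq]
  gcongr √(?_ + ?_)
  · rfl
  · exact sq_le_sq.2 (abs_max_sub_max_le_abs z.im z'.im ε)

lemma lipschitzWith_clampIm_field (hε : 0 < ε) (a : ℝ) :
    LipschitzWith ⟨2 / ε ^ 2, by positivity⟩ fun z : ℂ => -(2 / (clampIm ε z - a)) := by
  refine LipschitzWith.of_dist_le_mul fun z z' => ?_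
  have hz := clampIm_sub_ofReal_ne_zero hε z a
  have hz' := clampIm_sub_ofReal_ne_zero hε z' a
  have hdiff : -(2 / (clampIm ε z - a)) - -(2 / (clampIm ε z' - a))
      = 2 * (clampIm ε z - clampIm ε z') / ((clampIm ε z - a) * (clampIm ε z' - a)) := by
    field_simp
    ring
  rw [dist_eq_norm, dist_eq_norm, hdiff, norm_div, norm_mul, norm_mul, Complex.norm_ofNat]
  calc 2 * ‖clampIm ε z - clampIm ε z'‖ / (‖clampIm ε z - a‖ * ‖clampIm ε z' - a‖)
      ≤ 2 * ‖z - z'‖ / (ε * ε) := by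
        gcongr
        · exact norm_clampIm_sub_clampIm_le ε z z'
        · exact le_norm_clampIm_sub_ofReal ε z a
        · exact le_norm_clampIm_sub_ofReal ε z' a
    _ = 2 / ε ^ 2 * ‖z - z'‖ := by ring

lemma isPicardLindelof_clampIm_field {ξ : ℝ → ℝ} {t : ℝ} (hξ : ContinuousOn ξ (Icc 0 t))
    (ht : 0 ≤ t) (hε : 0 < ε) (z₀ : ℂ) :
    IsPicardLindelof (fun s z => -(2 / (clampIm ε z - (ξ s : ℂ)))) ⟨0, left_mem_Icc.2 ht⟩ z₀
      ⟨2 / ε * t, by positivity⟩ 0 ⟨2 / ε, by positivity⟩ ⟨2 / ε ^ 2, by positivity⟩ where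
  lipschitzOnWith s _ := (lipschitzWith_clampIm_field hε (ξ s)).lipschitzOnWith
  continuousOn z _ :=
    (continuousOn_const.div
      (continuousOn_const.sub (Complex.continuous_ofReal.comp_continuousOn hξ))
      fun s _ => clampIm_sub_ofReal_ne_zero hε z (ξ s)).neg
  norm_le s _ z _ := by
    rw [norm_neg, norm_div, Complex.norm_ofNat]
    exact div_le_div_of_nonneg_left zero_le_two hε (le_norm_clampIm_sub_ofReal ε z (ξ s))
  mul_max_le := by
    rw [NNReal.coe_zero, sub_zero, sub_self, sub_zero, max_eq_left ht]
    rfl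

end ClampIm

lemma exists_isBackwardTrajectory {ξ : ℝ → ℝ} {t : ℝ} {z₀ : ℂ} (hξ : ContinuousOn ξ (Icc 0 t))
    (ht : 0 ≤ t) (hz₀ : 0 < z₀.im) : ∃ w : ℝ → ℂ, w 0 = z₀ ∧ IsBackwardTrajectory ξ t w := by
  obtain ⟨w, hw0 : w 0 = z₀, hw⟩ :=
    (isPicardLindelof_clampIm_field hξ ht hz₀ z₀).exists_eq_forall_mem_Icc_hasDerivWithinAt₀
  have him : ∀ s ∈ Icc 0 t, HasDerivWithinAt (fun s => (w s).im)
      (-(2 / (clampIm z₀.im (w s) - (ξ s : ℂ)))).im (Icc 0 t) s :=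
    fun s hs => Complex.imCLM.hasFDerivAt.comp_hasDerivWithinAt s (hw s hs)
  have hmono : MonotoneOn (fun s => (w s).im) (Icc 0 t) := by
    refine monotoneOn_of_hasDerivWithinAt_nonneg (convex_Icc 0 t)
      (fun s hs => (him s hs).continuousWithinAt)
      (fun s hs => (him s (interior_subset hs)).mono interior_subset) fun s _ => ?_
    have : 0 ≤ (clampIm z₀.im (w s)).im := hz₀.le.trans (le_max_right _ _)
    simp only [Complex.neg_im, Complex.div_im, Complex.re_ofNat, Complex.im_ofNat, Complex.sub_im,
      Complex.ofReal_im, sub_zero, zero_mul, zero_div, zero_sub, neg_neg]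
    exact div_nonneg (mul_nonneg zero_le_two this) (Complex.normSq_nonneg _)
  have hge : ∀ s ∈ Icc 0 t, z₀.im ≤ (w s).im := fun s hs =>
    hw0 ▸ hmono (left_mem_Icc.2 ht) hs hs.1
  refine ⟨w, hw0, fun s hs => hz₀.trans_le (hge s hs), fun s hs => ?_⟩
  simpa only [clampIm_of_le (hge s hs)] using hw s hs

/-- `f` is a chordal Loewner chain on `[0, T]` of self-maps of the upper half-plane, driven
by `dr`; univalence of the maps `f u` is not required. -/
structure IsLoewnerChain (T : ℝ) (dr : ℝ → ℝ) (f : ℝ → ℂ → ℂ) : Prop where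
  differentiableOn : ∀ u ∈ Icc 0 T, DifferentiableOn ℂ (f u) {z : ℂ | 0 < z.im}
  mapsTo : ∀ u ∈ Icc 0 T, MapsTo (f u) {z : ℂ | 0 < z.im} {z : ℂ | 0 < z.im}
  zero : ∀ z : ℂ, 0 < z.im → f 0 z = z
  hasDerivWithinAt : ∀ z : ℂ, 0 < z.im → ∀ u ∈ Icc 0 T,
    HasDerivWithinAt (fun s => f s z) (-(2 / (z - (dr u : ℂ))) * deriv (f u) z) (Icc 0 T) u

lemma ball_im_subset_upperHalfPlane (z : ℂ) : Metric.ball z z.im ⊆ {z : ℂ | 0 < z.im} := by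
  intro ζ hζ
  have := (Complex.abs_im_le_norm (z - ζ)).trans_lt (mem_ball_iff_norm'.1 hζ)
  rw [Complex.sub_im] at this
  exact (sub_lt_self_iff _).1 ((le_abs_self _).trans_lt this)

namespace IsLoewnerChain

variable {T t : ℝ} {dr : ℝ → ℝ} {f : ℝ → ℂ → ℂ} {w : ℝ → ℂ}

lemma continuousOn (hf : IsLoewnerChain T dr f) {z : ℂ} (hz : 0 < z.im) :
    ContinuousOn (fun u => f u z) (Icc 0 T) :=
  fun u hu => (hf.hasDerivWithinAt z hz u hu).continuousWithinAt

lemma exists_norm_le (hf : IsLoewnerChain T dr f) {z₀ : ℂ} (hz₀ : 0 < z₀.im) :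
    ∃ B, ∀ u ∈ Icc 0 T, ∀ z ∈ Metric.ball z₀ (z₀.im / 2), ‖f u z‖ ≤ B := by
  obtain ⟨B, hB⟩ := isCompact_Icc.exists_bound_of_continuousOn (hf.continuousOn hz₀)
  have hsub := ball_im_subset_upperHalfPlane z₀
  refine ⟨2 + 3 * B, fun u hu z hz => ?_⟩
  calc ‖f u z‖ ≤ 2 + 3 * ‖f u z₀‖ := norm_le_of_mapsTo_upperHalfPlane
        ((hf.differentiableOn u hu).mono hsub) ((hf.mapsTo u hu).mono_left hsub) hz
    _ ≤ 2 + 3 * B := by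
      gcongr
      exact hB u hu

lemma hasDerivWithinAt_along_backwardTrajectory (hf : IsLoewnerChain T dr f) (htT : t ≤ T)
    (hw : IsBackwardTrajectory (fun s => dr (t - s)) t w) {s : ℝ} (hs : s ∈ Icc 0 t) :
    HasDerivWithinAt (fun u => f (t - u) (w u)) 0 (Icc 0 t) s := by
  have hmaps : MapsTo (fun u => t - u) (Icc 0 t) (Icc 0 T) := fun u hu =>
    ⟨sub_nonneg.2 hu.2, (sub_le_self t hu.1).trans htT⟩
  have hsub : HasDerivWithinAt (fun u => t - u) (-1) (Icc 0 t) s :=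
    (hasDerivWithinAt_id s _).const_sub t
  have hws := hw.im_pos s hs
  have hball : Metric.ball (w s) ((w s).im / 2) ⊆ {z : ℂ | 0 < z.im} :=
    (Metric.ball_subset_ball (half_le_self hws.le)).trans (ball_im_subset_upperHalfPlane _)
  obtain ⟨B, hB⟩ := hf.exists_norm_le hws
  refine (hasDerivWithinAt_comp_of_norm_le (g := fun u => f (t - u)) hs (half_pos hws)
    (fun u hu => (hf.differentiableOn _ (hmaps hu)).mono hball) (fun u hu => hB _ (hmaps hu))
    (fun z hz => ((hf.continuousOn (hball hz)).comp (by fun_prop) hmaps) s hs)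
    ((hf.hasDerivWithinAt _ hws _ (hmaps hs)).scomp s hsub hmaps)
    (hw.hasDerivWithinAt s hs)).congr_deriv ?_
  simp only [neg_smul, one_smul]
  ring

lemma eq_of_isBackwardTrajectory (hf : IsLoewnerChain T dr f) (ht : t ∈ Icc 0 T)
    (hw : IsBackwardTrajectory (fun s => dr (t - s)) t w) : f t (w 0) = w t := by
  have hder := fun s hs => hf.hasDerivWithinAt_along_backwardTrajectory ht.2 hw (s := s) hs
  have hconst := constant_of_has_deriv_right_zero (fun s hs => (hder s hs).continuousWithinAt)
    (fun s hs => (hder s (Ico_subset_Icc_self hs)).mono_of_mem_nhdsWithin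
      (Icc_mem_nhdsGE_of_mem hs)) t (right_mem_Icc.2 ht.1)
  rw [sub_self, sub_zero, hf.zero _ (hw.im_pos t (right_mem_Icc.2 ht.1))] at hconst
  exact hconst.symm

lemma abs_re_sub_le {σ p ε : ℝ} (hf : IsLoewnerChain T dr f)
    (hdr : HolderOnWith σ.toNNReal (1 / 2) dr (Icc 0 T)) (hσ0 : 0 < σ) (hσ4 : σ < 4)
    (hp : σ / (4 - σ) ≤ p) (hpe : 1 ≤ p * exp p) (ht : t ∈ Icc 0 T) (hε : 0 < ε) :
    |(f t (dr t + ε * Complex.I)).re - dr 0|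
      ≤ σ * (1 + p) * exp p / √(16 - σ ^ 2) * (f t (dr t + ε * Complex.I)).im := by
  have hmaps : MapsTo (fun s => t - s) (Icc 0 t) (Icc 0 T) := fun s hs =>
    ⟨sub_nonneg.2 hs.2, (sub_le_self t hs.1).trans ht.2⟩
  have hξ : HolderOnWith σ.toNNReal (1 / 2) (fun s => dr (t - s)) (Icc 0 t) :=
    fun s hs u hu => by simpa only [edist_sub_left] using hdr _ (hmaps hs) _ (hmaps hu)
  obtain ⟨w, hw0, hw⟩ := exists_isBackwardTrajectory (z₀ := dr t + ε * Complex.I)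
    (hξ.continuousOn (by norm_num)) ht.1 (by simpa using hε)
  have hbound := hw.abs_re_sub_le hξ ht.1 (by simp [hw0]) hσ0 hσ4 hp hpe
  rwa [sub_self, ← hf.eq_of_isBackwardTrajectory ht hw, hw0] at hbound

end IsLoewnerChain

theorem loewner_curve_cone_bound_general {σ T t p : ℝ} {dr : ℝ → ℝ} {f : ℝ → ℂ → ℂ} {c : ℂ}
    (hf : IsLoewnerChain T dr f) (hdr : HolderOnWith σ.toNNReal (1 / 2) dr (Icc 0 T))
    (hσ0 : 0 < σ) (hσ4 : σ < 4) (hp : σ / (4 - σ) ≤ p) (hpe : 1 ≤ p * exp p)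
    (ht : t ∈ Icc 0 T)
    (hc : Filter.Tendsto (fun y : ℝ => f t (dr t + y * Complex.I)) (nhdsWithin 0 (Ioi 0))
      (nhds c)) :
    |c.re - dr 0| ≤ σ * (1 + p) * exp p / √(16 - σ ^ 2) * c.im := by
  refine le_of_tendsto_of_tendsto
    (((Complex.continuous_re.tendsto c).comp hc).sub_const (dr 0)).abs
    (((Complex.continuous_im.tendsto c).comp hc).const_mul _) ?_
  filter_upwards [self_mem_nhdsWithin] with ε hε
  exact hf.abs_re_sub_le hdr hσ0 hσ4 hp hpe ht hε

/-- Cone theorem for Loewner curves, full range `0 < σ < 4`: a curve driven by a Lip-1/2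
function with seminorm at most `σ` stays in the cone `{|Re z| ≤ L_σ · Im z}`. -/
theorem loewner_curve_cone_bound
    (σ : ℝ) (hσ0 : 0 < σ)
    (dr : ℝ → ℝ) (hdrcont : ContinuousOn dr (Icc 0 1)) (hdr0 : dr 0 = 0)
    (hdrlip : ∀ s ∈ Icc (0 : ℝ) 1, ∀ u ∈ Icc (0 : ℝ) 1,
      |dr u - dr s| ≤ σ * Real.sqrt |u - s|)
    (f : ℝ → ℂ → ℂ)
    (hf_inj : ∀ u ∈ Icc (0 : ℝ) 1, InjOn (f u) {z : ℂ | 0 < z.im})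
    (hf_holo : ∀ u ∈ Icc (0 : ℝ) 1, DifferentiableOn ℂ (f u) {z : ℂ | 0 < z.im})
    (hf_maps : ∀ u ∈ Icc (0 : ℝ) 1, MapsTo (f u) {z : ℂ | 0 < z.im} {z : ℂ | 0 < z.im})
    (hf_zero : ∀ z : ℂ, 0 < z.im → f 0 z = z)
    (hf_ode : ∀ z : ℂ, 0 < z.im → ∀ u ∈ Icc (0 : ℝ) 1,
      HasDerivWithinAt (fun s => f s z)
        (-(2 / (z - (dr u : ℂ))) * deriv (f u) z) (Icc (0 : ℝ) 1) u)
    (γ : ℝ → ℂ) (hγcont : ContinuousOn γ (Icc 0 1))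
    (hγlim : ∀ u ∈ Icc (0 : ℝ) 1,
      Filter.Tendsto (fun y : ℝ => f u ((dr u : ℂ) + y * Complex.I))
        (nhdsWithin 0 (Ioi (0 : ℝ))) (nhds (γ u)))
    (hσ4 : σ < 4)
    (p : ℝ) (hp_mem : p ∈ Ioi (σ / (4 - σ)))
    (hp_eq : Real.exp p =
      Real.sqrt (16 - σ ^ 2) / Real.sqrt (16 * p ^ 2 - σ ^ 2 * (p + 1) ^ 2))
    (L : ℝ) (hL : L = σ * (1 + p) * Real.exp p / Real.sqrt (16 - σ ^ 2)) :
    ∀ u ∈ Icc (0 : ℝ) 1, |(γ u).re| ≤ L * (γ u).im := by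
  intro t ht
  simpa only [hdr0, sub_zero, hL] using loewner_curve_cone_bound_general
    ⟨hf_holo, hf_maps, hf_zero, hf_ode⟩ ((holderOnWith_half_iff hσ0.le).2 hdrlip)
    hσ0 hσ4 (le_of_lt hp_mem) (one_le_mul_exp_of_exp_eq hσ0 hσ4 hp_mem hp_eq) ht (hγlim t ht)
end
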